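/- Let G=(V,E) be a bipartite exchange network with weights w_e ∈ [0,1], let κ∈(0,1), and take any ξ ∈ (0,1) and η ∈ (0,1). Construct a perturbed instance with weights w̄_e = w_e + ηU_e, where the U_e are i.i.d. uniform on [0,1]. Then there exists a constant C = C(κ) < ∞ such that, setting T* = C (n²|E|/(ηξ))², the following holds with probability at least 1 − ξ: there is a matching M such that for all t ≥ T*, the iterate α^t of the natural dynamics on the perturbed instance induces M (independently of t), and (γ^t, M) is an ε(t)-NB solution of the perturbed instance with ε(t) = 12/√(π κ(1−κ) t). -/

import Mathlib

namespace EN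

open Finset

variable {V : Type*}

/-- The nonnegative part `(x)₊ = max (x, 0)`. -/
noncomputable def pos (x : ℝ) : ℝ := max x 0

variable [Fintype V] [DecidableEq V]

/-- The maximum of `f` over a finite set of vertices (`0` over the empty set). -/
noncomputable def fmax (s : Finset V) (f : V → ℝ) : ℝ := ⨆ k ∈ s, f k

/-- The offer from `i` to `j` given messages `α` and weights `w`:
`m_{i→j} = (w_{ij} − α_{i\j})₊ − (1/2) (w_{ij} − α_{i\j} − α_{j\i})₊`. -/
noncomputable def offer (w α : V → V → ℝ) (i j : V) : ℝ :=
  pos (w i j - α i j) - (1 / 2) * pos (w i j - α i j - α j i)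

/-- The update operator `T` of the natural dynamics:
`(Tα)_{i\j} = max_{k ∈ ∂i \ j} m_{k→i}`. -/
noncomputable def upd (G : SimpleGraph V) [DecidableRel G.Adj] (w α : V → V → ℝ)
    (i j : V) : ℝ :=
  fmax ((G.neighborFinset i).erase j) fun k => offer w α k i

/-- The earnings estimate `γ_i = max_{k ∈ ∂i} m_{k→i}`. -/
noncomputable def earn (G : SimpleGraph V) [DecidableRel G.Adj] (w α : V → V → ℝ)
    (i : V) : ℝ :=
  fmax (G.neighborFinset i) fun k => offer w α k i

/-- Exchange network weights: symmetric and positive on every edge. -/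
def GoodW (G : SimpleGraph V) (w : V → V → ℝ) : Prop :=
  (∀ i j, w i j = w j i) ∧ ∀ i j, G.Adj i j → 0 < w i j

/-- A valid message vector: nonnegative on all directed edges. -/
def ValidMsg (G : SimpleGraph V) (α : V → V → ℝ) : Prop :=
  ∀ i j, G.Adj i j → 0 ≤ α i j

/-- Fixed point of the natural-dynamics update operator. -/
def IsFixedPt (G : SimpleGraph V) [DecidableRel G.Adj] (w α : V → V → ℝ) : Prop :=
  ∀ i j, G.Adj i j → upd G w α i j = α i j

/-- `ε`-fixed point. -/
def IsEpsFixedPt (G : SimpleGraph V) [DecidableRel G.Adj] (w α : V → V → ℝ) (ε : ℝ) : Prop :=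
  ∀ i j, G.Adj i j → |α i j - upd G w α i j| ≤ ε

/-- The natural dynamics with damping factor `κ`: `α^{t+1} = (1−κ) α^t + κ T α^t`. -/
noncomputable def dyn (G : SimpleGraph V) [DecidableRel G.Adj] (w : V → V → ℝ) (κ : ℝ)
    (α0 : V → V → ℝ) : ℕ → V → V → ℝ
  | 0 => α0
  | t + 1 => fun i j =>
      (1 - κ) * dyn G w κ α0 t i j + κ * upd G w (dyn G w κ α0 t) i j

/-- Sup norm over directed edges. -/
noncomputable def msgSup (G : SimpleGraph V) [DecidableRel G.Adj] (f : V → V → ℝ) : ℝ :=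
  ⨆ p : V × V, if G.Adj p.1 p.2 then |f p.1 p.2| else 0

/-- `M` is a matching of `G`: a symmetric subrelation of adjacency pairing each node
with at most one partner. -/
structure IsMatching (G : SimpleGraph V) (M : V → V → Prop) : Prop where
  subset : ∀ i j, M i j → G.Adj i j
  symm : ∀ i j, M i j → M j i
  unique : ∀ i j k, M i j → M i k → j = k

/-- `(M, γ)` is a trade outcome. -/
def IsOutcome (G : SimpleGraph V) (w : V → V → ℝ) (M : V → V → Prop) (γ : V → ℝ) : Prop :=
  IsMatching G M ∧ (∀ i, 0 ≤ γ i) ∧ (∀ i j, M i j → γ i + γ j = w i j) ∧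
    ∀ i, (∀ j, ¬M i j) → γ i = 0

/-- Stability of an outcome. -/
def Stable (G : SimpleGraph V) (w : V → V → ℝ) (M : V → V → Prop) (γ : V → ℝ) : Prop :=
  ∀ i j, G.Adj i j → ¬M i j → w i j ≤ γ i + γ j

/-- The best alternative of `i` excluding `j`: `max_{k ∈ ∂i \ j} (w_{ik} − γ_k)₊`. -/
noncomputable def bestAlt (G : SimpleGraph V) [DecidableRel G.Adj] (w : V → V → ℝ)
    (γ : V → ℝ) (i j : V) : ℝ :=
  fmax ((G.neighborFinset i).erase j) fun k => pos (w i k - γ k)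

/-- Balance of an outcome. -/
def Balanced (G : SimpleGraph V) [DecidableRel G.Adj] (w : V → V → ℝ) (M : V → V → Prop)
    (γ : V → ℝ) : Prop :=
  ∀ i j, M i j → γ i - bestAlt G w γ i j = γ j - bestAlt G w γ j i

/-- Nash bargaining solution: a stable and balanced trade outcome. -/
def IsNBSolution (G : SimpleGraph V) [DecidableRel G.Adj] (w : V → V → ℝ)
    (M : V → V → Prop) (γ : V → ℝ) : Prop :=
  IsOutcome G w M γ ∧ Stable G w M γ ∧ Balanced G w M γ

/-- `ε`-balance. -/
def EpsBalanced (G : SimpleGraph V) [DecidableRel G.Adj] (w : V → V → ℝ)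
    (M : V → V → Prop) (γ : V → ℝ) (ε : ℝ) : Prop :=
  ∀ i j, M i j → |(γ i - bestAlt G w γ i j) - (γ j - bestAlt G w γ j i)| ≤ ε

/-- `ε`-Nash bargaining solution. -/
def IsEpsNB (G : SimpleGraph V) [DecidableRel G.Adj] (w : V → V → ℝ)
    (M : V → V → Prop) (γ : V → ℝ) (ε : ℝ) : Prop :=
  IsOutcome G w M γ ∧ Stable G w M γ ∧ EpsBalanced G w M γ ε

/-- Feasible point of the LP relaxation of maximum weight matching. -/
def LPFeasible (G : SimpleGraph V) [DecidableRel G.Adj] (x : V → V → ℝ) : Prop :=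
  (∀ i j, x i j = x j i) ∧ (∀ i j, 0 ≤ x i j) ∧ (∀ i j, ¬G.Adj i j → x i j = 0) ∧
    ∀ i, ∑ j ∈ G.neighborFinset i, x i j ≤ 1

/-- LP objective `Σ_{(i,j)∈E} w_{ij} x_{ij}` (each undirected edge counted once). -/
noncomputable def LPval (G : SimpleGraph V) [DecidableRel G.Adj] (w x : V → V → ℝ) : ℝ :=
  (1 / 2) * ∑ i, ∑ j ∈ G.neighborFinset i, w i j * x i j

/-- Optimal point of the LP relaxation of maximum weight matching. -/
def LPOptimal (G : SimpleGraph V) [DecidableRel G.Adj] (w x : V → V → ℝ) : Prop :=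
  LPFeasible G x ∧ ∀ y, LPFeasible G y → LPval G w y ≤ LPval G w x

def Integral (x : V → V → ℝ) : Prop := ∀ i j, x i j = 0 ∨ x i j = 1

def HalfIntegral (x : V → V → ℝ) : Prop := ∀ i j, x i j = 0 ∨ x i j = 1 / 2 ∨ x i j = 1

open Classical in
/-- The LP point associated to a matching. -/
noncomputable def mInd (M : V → V → Prop) (i j : V) : ℝ := if M i j then 1 else 0

/-- The state with offers `m` induces the matching `M`: every node receiving a positive
offer is matched and receives its unique best offer from its partner, and every node
with zero earnings is unmatched. -/
def Induces (G : SimpleGraph V) [DecidableRel G.Adj] (m : V → V → ℝ)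
    (M : V → V → Prop) : Prop :=
  IsMatching G M ∧
    (∀ i, (∃ k, G.Adj i k ∧ 0 < m k i) →
      ∃ j, M i j ∧ ∀ k, G.Adj i k → k ≠ j → m k i < m j i) ∧
    ∀ i, (fmax (G.neighborFinset i) fun k => m k i) = 0 → ∀ j, ¬M i j

/-- Feasibility for the dual LP. -/
def DualFeasible (G : SimpleGraph V) (w : V → V → ℝ) (y : V → ℝ) : Prop :=
  (∀ i, 0 ≤ y i) ∧ ∀ i j, G.Adj i j → w i j ≤ y i + y j

/-- Optimality for the dual LP. -/
def DualOptimal (G : SimpleGraph V) (w : V → V → ℝ) (y : V → ℝ) : Prop :=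
  DualFeasible G w y ∧ ∀ z, DualFeasible G w z → ∑ i, y i ≤ ∑ i, z i

/-- The unmatched balance property at every edge. -/
def UnmatchedBalance (G : SimpleGraph V) [DecidableRel G.Adj] (w : V → V → ℝ)
    (y : V → ℝ) : Prop :=
  ∀ i j, G.Adj i j → y i - bestAlt G w y i j = y j - bestAlt G w y j i

/-! ### Unequal division -/

/-- Valid split fractions: `r_{ij} ∈ (0,1)` with `r_{ij} + r_{ji} = 1` on every edge. -/
def GoodR (G : SimpleGraph V) (r : V → V → ℝ) : Prop :=
  ∀ i j, G.Adj i j → 0 < r i j ∧ r i j < 1 ∧ r i j + r j i = 1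

/-- The UD offer from `i` to `j`. -/
noncomputable def offerUD (w r α : V → V → ℝ) (i j : V) : ℝ :=
  pos (w i j - α i j) - r i j * pos (w i j - α i j - α j i)

/-- The UD update operator. -/
noncomputable def updUD (G : SimpleGraph V) [DecidableRel G.Adj] (w r α : V → V → ℝ)
    (i j : V) : ℝ :=
  fmax ((G.neighborFinset i).erase j) fun k => offerUD w r α k i

/-- The UD earnings estimate. -/
noncomputable def earnUD (G : SimpleGraph V) [DecidableRel G.Adj] (w r α : V → V → ℝ)
    (i : V) : ℝ :=
  fmax (G.neighborFinset i) fun k => offerUD w r α k i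

/-- Fixed point of the UD update operator. -/
def IsFixedPtUD (G : SimpleGraph V) [DecidableRel G.Adj] (w r α : V → V → ℝ) : Prop :=
  ∀ i j, G.Adj i j → updUD G w r α i j = α i j

/-- Correct division. -/
def CorrectDiv (G : SimpleGraph V) [DecidableRel G.Adj] (w r : V → V → ℝ)
    (M : V → V → Prop) (γ : V → ℝ) : Prop :=
  ∀ i j, M i j →
    (1 / r i j) * (γ i - bestAlt G w γ i j) = (1 / r j i) * (γ j - bestAlt G w γ j i)

/-- UD solution: a stable trade outcome satisfying correct division. -/
def IsUDSolution (G : SimpleGraph V) [DecidableRel G.Adj] (w r : V → V → ℝ)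
    (M : V → V → Prop) (γ : V → ℝ) : Prop :=
  IsOutcome G w M γ ∧ Stable G w M γ ∧ CorrectDiv G w r M γ

/-- Edge surplus. -/
noncomputable def surp (G : SimpleGraph V) [DecidableRel G.Adj] (w : V → V → ℝ)
    (γ : V → ℝ) (i j : V) : ℝ :=
  w i j - bestAlt G w γ i j - bestAlt G w γ j i

open Classical in
/-- The rebalanced allocation `γ^reb`. -/
noncomputable def reb (G : SimpleGraph V) [DecidableRel G.Adj] (w r : V → V → ℝ)
    (M : V → V → Prop) (γ : V → ℝ) (i : V) : ℝ :=
  if h : ∃ j, M i j then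
    bestAlt G w γ i h.choose + r i h.choose * surp G w γ i h.choose
  else 0

/-- The Edge Rebalancing iteration `γ^{t+1} = κ γ^reb(γ^t) + (1−κ) γ^t`. -/
noncomputable def rebIter (G : SimpleGraph V) [DecidableRel G.Adj] (w r : V → V → ℝ)
    (M : V → V → Prop) (κ : ℝ) (γ0 : V → ℝ) : ℕ → V → ℝ
  | 0 => γ0
  | t + 1 => fun i =>
      κ * reb G w r M (rebIter G w r M κ γ0 t) i + (1 - κ) * rebIter G w r M κ γ0 t i

/-- The perturbed weights `w̄_{ij} = w_{ij} + η U_{ij}`, where `U` is read off from the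
sample point `ω` (one coordinate per undirected edge). -/
noncomputable def pertW {V : Type*} [Fintype V] [DecidableEq V] (G : SimpleGraph V)
    [DecidableRel G.Adj] (w : V → V → ℝ) (η : ℝ)
    (ω : {e : Sym2 V // e ∈ G.edgeFinset} → ℝ) (i j : V) : ℝ :=
  w i j + η * (if h : G.Adj i j then
    ω ⟨s(i, j), SimpleGraph.mem_edgeFinset.mpr ((SimpleGraph.mem_edgeSet G).mpr h)⟩ else 0)

/-!
The update operator is nonexpansive, so the damped dynamics is a Krasnoselskii–Mann iteration: its
fixed-point residual after `t` steps is at most `B / √(2κ(1 - κ)(t + 1))`, because the distances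
between iterates obey the recursion for the survival probability of a lazy symmetric walk.

With probability at least `1 - ξ` every perturbed edge weight is at distance at least
`g * |V|`, where `g = ηξ / (2 |V| |E|)`, from the threshold that decides whether the heaviest
matching uses the edge, and then the heaviest matching `M` beats all others by that much. In a
bipartite graph, duality for the assignment problem spreads this gap into a dual certificate `y`
for `M` that is strictly complementary with slack `g` at every edge.

Let the residual be much smaller than `g / |V|`. If a matched vertex whose earnings are not much
below `y` did not clearly prefer its partner, slackness would produce a matched vertex with a larger
surplus of the earnings over `y` that does not clearly prefer its partner either. A chain of such
vertices has length at most `|V|`, so the errors made along it cannot add up to `g`, and every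
matched vertex clearly prefers its partner. Hence `M` is induced, and each split on `M` agrees
with the Nash bargaining split up to four times the residual.
-/

/-! ### The convergence rate of the Krasnoselskii–Mann iteration -/

section BinomialMean

/-- The mean of `f` under the binomial distribution with `n` trials and success probability `p`,
as a linear functional of `f`; the recursion conditions on one of the trials. -/
noncomputable def binomialMean (p : ℝ) : ℕ → (ℕ → ℝ) →ₗ[ℝ] ℝ
  | 0 => LinearMap.proj 0
  | n + 1 => (1 - p) • binomialMean p n + p • binomialMean p n ∘ₗ LinearMap.funLeft ℝ ℝ Nat.succ

variable {p : ℝ}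

@[simp]
theorem binomialMean_zero (f : ℕ → ℝ) : binomialMean p 0 f = f 0 := rfl

theorem binomialMean_succ (n : ℕ) (f : ℕ → ℝ) :
    binomialMean p (n + 1) f
      = (1 - p) * binomialMean p n f + p * binomialMean p n fun k => f (k + 1) := rfl

theorem binomialMean_const (n : ℕ) (c : ℝ) : binomialMean p n (fun _ => c) = c := by
  induction n with
  | zero => rfl
  | succ n ih => rw [binomialMean_succ, ih]; ring

theorem binomialMean_mono (hp₀ : 0 ≤ p) (hp₁ : p ≤ 1) (n : ℕ) {f g : ℕ → ℝ} (hfg : ∀ k, f k ≤ g k) :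
    binomialMean p n f ≤ binomialMean p n g := by
  have : 0 ≤ 1 - p := sub_nonneg.mpr hp₁
  induction n generalizing f g with
  | zero => exact hfg 0
  | succ n ih =>
    rw [binomialMean_succ, binomialMean_succ]
    gcongr
    · exact ih hfg
    · exact ih fun k => hfg (k + 1)

theorem binomialMean_id_mul (n : ℕ) (f : ℕ → ℝ) :
    binomialMean p (n + 1) (fun k => k * f k)
      = (n + 1) * p * binomialMean p n fun k => f (k + 1) := by
  induction n generalizing f with
  | zero => simp [binomialMean_succ]
  | succ n ih =>
    have hshift : binomialMean p (n + 1) (fun k => ((k + 1 : ℕ) : ℝ) * f (k + 1))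
        = binomialMean p (n + 1) (fun k => k * f (k + 1))
          + binomialMean p (n + 1) (fun k => f (k + 1)) := by
      rw [← map_add]
      congr 1
      ext k
      simp only [Pi.add_apply]
      push_cast
      ring
    rw [binomialMean_succ (n + 1), hshift, ih f, ih fun k => f (k + 1), binomialMean_succ n]
    push_cast
    ring

theorem binomialMean_inv_succ_le (hp₀ : 0 < p) (hp₁ : p ≤ 1) (n : ℕ) :
    binomialMean p n (fun k => ((k : ℝ) + 1)⁻¹) ≤ (p * (n + 1))⁻¹ := by
  have hsize := binomialMean_id_mul (p := p) n fun k => (k : ℝ)⁻¹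
  have hle : binomialMean p (n + 1) (fun k => (k : ℝ) * (k : ℝ)⁻¹) ≤ 1 :=
    (binomialMean_mono hp₀.le hp₁ _ fun _ => mul_inv_le_one).trans_eq (binomialMean_const _ 1)
  push_cast at hsize
  rw [← one_div, le_div_iff₀ (by positivity)]
  linarith

theorem inv_sqrt_le_tangent {x y : ℝ} (hx : 0 < x) (hy : 0 < y) :
    (√x)⁻¹ ≤ √y / 2 * x⁻¹ + (2 * √y)⁻¹ := by
  have : 0 < √x := Real.sqrt_pos.mpr hx
  have : 0 < √y := Real.sqrt_pos.mpr hy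
  have hgap : √y / 2 * x⁻¹ + (2 * √y)⁻¹ - (√x)⁻¹ = (√y - √x) ^ 2 / (2 * √y * √x ^ 2) := by
    rw [← Real.sq_sqrt hx.le, Real.sqrt_sq (Real.sqrt_nonneg x)]
    field_simp
    ring
  linarith [show 0 ≤ (√y - √x) ^ 2 / (2 * √y * √x ^ 2) by positivity]

theorem binomialMean_inv_sqrt_succ_le (hp₀ : 0 < p) (hp₁ : p ≤ 1) (n : ℕ) :
    binomialMean p n (fun k => (√((k : ℝ) + 1))⁻¹) ≤ (√(p * (n + 1)))⁻¹ := by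
  have hpos : 0 < p * ((n : ℝ) + 1) := by positivity
  set s := √(p * ((n : ℝ) + 1)) with hs
  have hs₀ : 0 < s := Real.sqrt_pos.mpr hpos
  calc binomialMean p n (fun k => (√((k : ℝ) + 1))⁻¹)
      ≤ binomialMean p n ((s / 2) • (fun k : ℕ => ((k : ℝ) + 1)⁻¹) + fun _ => (2 * s)⁻¹) :=
        binomialMean_mono hp₀.le hp₁ n fun k => inv_sqrt_le_tangent (by positivity) hpos
    _ = s / 2 * binomialMean p n (fun k => ((k : ℝ) + 1)⁻¹) + (2 * s)⁻¹ := by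
        rw [map_add, map_smul, binomialMean_const, smul_eq_mul]
    _ ≤ s / 2 * (s ^ 2)⁻¹ + (2 * s)⁻¹ := by
        rw [hs, Real.sq_sqrt hpos.le]
        gcongr
        exact binomialMean_inv_succ_le hp₀ hp₁ n
    _ = s⁻¹ := by field_simp; norm_num

end BinomialMean

section Survival

/-- The probability that a simple symmetric walk on `ℕ` started at `h` does not visit `0` during
its first `n` steps. -/
noncomputable def walkSurvival : ℕ → ℕ → ℝ
  | _, 0 => 0
  | 0, _ + 1 => 1
  | n + 1, h + 1 => (walkSurvival n (h + 2) + walkSurvival n h) / 2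

@[simp]
theorem walkSurvival_zero_right (n : ℕ) : walkSurvival n 0 = 0 := by
  cases n <;> rfl

theorem sum_range_succ_choose_succ (n x : ℕ) :
    ∑ j ∈ range (x + 1), (n + 1).choose j
      = ∑ j ∈ range (x + 1), n.choose j + ∑ j ∈ range x, n.choose j := by
  rw [sum_range_succ', sum_range_succ' fun j => n.choose j]
  simp only [Nat.choose_succ_succ, sum_add_distrib, Nat.choose_zero_right]
  ring

/-- Both sides satisfy the same recursion, by Pascal's rule; the right-hand side comes from the
reflection principle. -/
theorem two_pow_mul_walkSurvival (n h : ℕ) :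
    2 ^ n * walkSurvival n h
      = (∑ j ∈ range ((n + h + 1) / 2), n.choose j : ℕ)
        - (∑ j ∈ range ((n - h + 1) / 2), n.choose j : ℕ) := by
  induction n generalizing h with
  | zero =>
    rcases h with _ | h
    · simp
    · rw [show (0 + (h + 1) + 1) / 2 = h / 2 + 1 by omega]
      simp [walkSurvival, sum_range_succ']
  | succ n ih =>
    rcases h with _ | h
    · simp
    have hrec : (2 : ℝ) ^ (n + 1) * walkSurvival (n + 1) (h + 1)
        = 2 ^ n * walkSurvival n (h + 2) + 2 ^ n * walkSurvival n h := by
      rw [walkSurvival, pow_succ]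
      ring
    rw [hrec, ih, ih, show (n + 1 + (h + 1) + 1) / 2 = (n + h + 1) / 2 + 1 by omega,
      show (n + (h + 2) + 1) / 2 = (n + h + 1) / 2 + 1 by omega,
      show (n + 1 - (h + 1) + 1) / 2 = (n - h + 1) / 2 by omega, sum_range_succ_choose_succ]
    rcases lt_or_ge h n with hlt | hge
    · rw [show (n - h + 1) / 2 = (n - (h + 2) + 1) / 2 + 1 by omega, sum_range_succ_choose_succ]
      push_cast
      ring
    · rw [show (n - h + 1) / 2 = 0 by omega, show (n - (h + 2) + 1) / 2 = 0 by omega]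
      simp

theorem two_pow_mul_walkSurvival_one (n : ℕ) :
    2 ^ n * walkSurvival n 1 = n.choose (n / 2) := by
  rw [two_pow_mul_walkSurvival, show (n + 1 + 1) / 2 = n / 2 + 1 by omega,
    show (n - 1 + 1) / 2 = n / 2 by omega, sum_range_succ]
  push_cast
  ring

theorem centralBinom_sq_mul_le (n : ℕ) : n.centralBinom ^ 2 * (2 * n + 1) ≤ 16 ^ n := by
  induction n with
  | zero => simp
  | succ n ih =>
    refine Nat.le_of_mul_le_mul_left ?_ (show 0 < (n + 1) ^ 2 by positivity)
    calc (n + 1) ^ 2 * ((n + 1).centralBinom ^ 2 * (2 * (n + 1) + 1))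
        = ((n + 1) * (n + 1).centralBinom) ^ 2 * (2 * n + 3) := by ring
      _ = 4 * (2 * n + 1) * (2 * n + 3) * (n.centralBinom ^ 2 * (2 * n + 1)) := by
          rw [Nat.succ_mul_centralBinom_succ]; ring
      _ ≤ 16 * (n + 1) ^ 2 * 16 ^ n := Nat.mul_le_mul (by nlinarith) ih
      _ = (n + 1) ^ 2 * 16 ^ (n + 1) := by ring

theorem choose_half_sq_mul_le (n : ℕ) : n.choose (n / 2) ^ 2 * (n + 1) ≤ 4 ^ n := by
  rcases Nat.even_or_odd' n with ⟨k, rfl | rfl⟩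
  · rw [Nat.mul_div_cancel_left k two_pos, ← Nat.centralBinom, pow_mul]
    exact centralBinom_sq_mul_le k
  · rw [show (2 * k + 1) / 2 = k by omega]
    have hcentral : (k + 1).centralBinom = 2 * (2 * k + 1).choose k := by
      rw [Nat.centralBinom, show 2 * (k + 1) = 2 * k + 1 + 1 by ring, Nat.choose_succ_succ,
        Nat.choose_symm_half]
      ring
    have hbound := centralBinom_sq_mul_le (k + 1)
    rw [hcentral] at hbound
    have hpow : 4 * 4 ^ (2 * k + 1) = 16 ^ (k + 1) := by
      rw [pow_succ 4, pow_mul]; ring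
    nlinarith [sq_nonneg ((2 * k + 1).choose k)]

theorem walkSurvival_one_le (n : ℕ) : walkSurvival n 1 ≤ (√(n + 1))⁻¹ := by
  have hchoose : (n.choose (n / 2) : ℝ) ^ 2 * (n + 1) ≤ 4 ^ n := by
    exact_mod_cast choose_half_sq_mul_le n
  rw [← two_pow_mul_walkSurvival_one, mul_pow, ← pow_mul, mul_comm n, pow_mul, mul_assoc] at hchoose
  norm_num at hchoose
  rw [← Real.sqrt_inv]
  refine Real.le_sqrt_of_sq_le ?_
  rwa [← one_div, le_div_iff₀ (by positivity)]

/-- The probability that a lazy symmetric walk on `ℕ`, which moves at each step with probability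
`2κ(1 - κ)`, does not visit `0` during its first `n` steps when started at `h`. -/
noncomputable def lazySurvival (κ : ℝ) (n h : ℕ) : ℝ :=
  binomialMean (2 * κ * (1 - κ)) n fun k => walkSurvival k h

theorem lazySurvival_zero_right (κ : ℝ) (n : ℕ) : lazySurvival κ n 0 = 0 := by
  simp [lazySurvival, binomialMean_const]

theorem lazySurvival_zero_succ (κ : ℝ) (h : ℕ) : lazySurvival κ 0 (h + 1) = 1 := rfl

theorem lazySurvival_succ_succ (κ : ℝ) (n h : ℕ) :
    lazySurvival κ (n + 1) (h + 1)
      = ((1 - κ) ^ 2 + κ ^ 2) * lazySurvival κ n (h + 1)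
        + κ * (1 - κ) * (lazySurvival κ n (h + 2) + lazySurvival κ n h) := by
  have hwalk : (fun k => walkSurvival (k + 1) (h + 1))
      = (1 / 2 : ℝ) • ((fun k => walkSurvival k (h + 2)) + fun k => walkSurvival k h) := by
    ext k
    simp only [walkSurvival, Pi.smul_apply, Pi.add_apply, smul_eq_mul]
    ring
  simp only [lazySurvival, binomialMean_succ, hwalk, map_smul, map_add, smul_eq_mul]
  ring

theorem lazySurvival_one_le {κ : ℝ} (hκ : κ ∈ Set.Ioo (0 : ℝ) 1) (n : ℕ) :
    lazySurvival κ n 1 ≤ (√(2 * κ * (1 - κ) * (n + 1)))⁻¹ := by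
  have hp₀ : 0 < 2 * κ * (1 - κ) := by have := sub_pos.mpr hκ.2; have := hκ.1; positivity
  have hp₁ : 2 * κ * (1 - κ) ≤ 1 := by nlinarith [sq_nonneg (κ - 1 / 2)]
  exact (binomialMean_mono hp₀.le hp₁ n walkSurvival_one_le).trans
    (binomialMean_inv_sqrt_succ_le hp₀ hp₁ n)

end Survival

section KrasnoselskiiMann

variable {E : Type*} [SeminormedAddCommGroup E] [NormedSpace ℝ E] {κ : ℝ} {x y : ℕ → E}

theorem norm_convexComb_sub_le (hκ₀ : 0 ≤ κ) (hκ₁ : κ ≤ 1) {u v z : E} {A B : ℝ}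
    (hu : ‖u - z‖ ≤ A) (hv : ‖v - z‖ ≤ B) :
    ‖(1 - κ) • u + κ • v - z‖ ≤ (1 - κ) * A + κ * B := by
  have hκ : 0 ≤ 1 - κ := sub_nonneg.mpr hκ₁
  calc ‖(1 - κ) • u + κ • v - z‖ = ‖(1 - κ) • (u - z) + κ • (v - z)‖ := by congr 1; module
    _ ≤ (1 - κ) * ‖u - z‖ + κ * ‖v - z‖ := by
        refine (norm_add_le _ _).trans_eq ?_
        rw [norm_smul_of_nonneg hκ, norm_smul_of_nonneg hκ₀]
    _ ≤ (1 - κ) * A + κ * B := by gcongr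

theorem norm_iterate_sub_le_binomialMean (hκ₀ : 0 ≤ κ) (hκ₁ : κ ≤ 1)
    (hstep : ∀ n, x (n + 1) = (1 - κ) • x n + κ • y n) {c : ℝ} {f : ℕ → ℝ} (hf : f 0 = 0) {m : ℕ}
    (hxy : ∀ k, ‖x m - y (m + k)‖ ≤ c * binomialMean κ k fun h => f (h + 1)) (k : ℕ) :
    ‖x m - x (m + k)‖ ≤ c * binomialMean κ k f := by
  induction k with
  | zero => simp [hf]
  | succ k ih =>
    have hxy' := hxy k
    rw [norm_sub_rev] at ih hxy' ⊢
    rw [← add_assoc, hstep, binomialMean_succ]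
    exact (norm_convexComb_sub_le hκ₀ hκ₁ ih hxy').trans_eq (by ring)

/-- Nonexpansiveness turns the bounds at `m` into bounds at `m + 1`; the resulting recursion in
`(m, k)` is the one that the survival probabilities of the lazy walk satisfy. -/
theorem norm_iterate_sub_le_lazySurvival (hκ₀ : 0 ≤ κ) (hκ₁ : κ ≤ 1)
    (hstep : ∀ n, x (n + 1) = (1 - κ) • x n + κ • y n)
    (hnonexp : ∀ m n, ‖y m - y n‖ ≤ ‖x m - x n‖) {c : ℝ} (hinit : ∀ n, ‖x 0 - y n‖ ≤ c) (m k : ℕ) :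
    ‖x m - y (m + k)‖ ≤ c * binomialMean κ k fun h => lazySurvival κ m (h + 1) := by
  induction m generalizing k with
  | zero => simpa only [lazySurvival_zero_succ, binomialMean_const, mul_one] using hinit _
  | succ m ih =>
    have hiter : ‖y m - y (m + (k + 1))‖ ≤ c * binomialMean κ (k + 1) (lazySurvival κ m) :=
      (hnonexp _ _).trans
        (norm_iterate_sub_le_binomialMean hκ₀ hκ₁ hstep (lazySurvival_zero_right κ m) ih _)
    have hlazy : (fun h => lazySurvival κ (m + 1) (h + 1))
        = ((1 - κ) ^ 2 + κ ^ 2) • (fun h => lazySurvival κ m (h + 1))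
          + (κ * (1 - κ)) • ((fun h => lazySurvival κ m (h + 2)) + lazySurvival κ m) := by
      ext h
      exact lazySurvival_succ_succ κ m h
    rw [add_right_comm, add_assoc, hstep, hlazy]
    refine (norm_convexComb_sub_le hκ₀ hκ₁ (ih (k + 1)) hiter).trans_eq ?_
    simp only [binomialMean_succ, map_add, map_smul, smul_eq_mul]
    ring

theorem norm_iterate_sub_le_div_sqrt (hκ : κ ∈ Set.Ioo (0 : ℝ) 1)
    (hstep : ∀ n, x (n + 1) = (1 - κ) • x n + κ • y n)
    (hnonexp : ∀ m n, ‖y m - y n‖ ≤ ‖x m - x n‖) {c : ℝ} (hinit : ∀ n, ‖x 0 - y n‖ ≤ c) (n : ℕ) :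
    ‖x n - y n‖ ≤ c / √(2 * κ * (1 - κ) * (n + 1)) := by
  have hc : 0 ≤ c := (norm_nonneg _).trans (hinit 0)
  calc ‖x n - y n‖ ≤ c * lazySurvival κ n 1 :=
        norm_iterate_sub_le_lazySurvival hκ.1.le hκ.2.le hstep hnonexp hinit n 0
    _ ≤ c / √(2 * κ * (1 - κ) * (n + 1)) :=
        mul_le_mul_of_nonneg_left (lazySurvival_one_le hκ n) hc

end KrasnoselskiiMann

/-! ### Offers, updates and the natural dynamics -/

section FMax

variable {ι : Type*} {s : Finset ι} {f g : ι → ℝ}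

theorem fmax_le {c : ℝ} (hc : 0 ≤ c) (h : ∀ k ∈ s, f k ≤ c) : fmax s f ≤ c :=
  Real.iSup_le (fun k => Real.iSup_le (h k) hc) hc

variable [Finite ι]

theorem le_fmax {k : ι} (hk : k ∈ s) : f k ≤ fmax s f := by
  simpa [fmax, hk] using le_ciSup (Set.finite_range fun k => ⨆ _ : k ∈ s, f k).bddAbove k

theorem fmax_nonneg {i : ι} (hi : i ∉ s) : 0 ≤ fmax s f := by
  simpa [fmax, hi] using le_ciSup (Set.finite_range fun k => ⨆ _ : k ∈ s, f k).bddAbove i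

theorem exists_eq_fmax (h : 0 < fmax s f) : ∃ k ∈ s, f k = fmax s f := by
  have : Nonempty ι := by
    by_contra hempty
    rw [not_nonempty_iff] at hempty
    simp [fmax] at h
  obtain ⟨k, hk⟩ := exists_eq_ciSup_of_finite (f := fun k => ⨆ _ : k ∈ s, f k)
  change _ = fmax s f at hk
  by_cases hks : k ∈ s
  · exact ⟨k, hks, by simpa [hks] using hk⟩
  · simp only [hks, Real.iSup_of_isEmpty] at hk
    exact absurd hk h.ne

theorem abs_fmax_sub_fmax_le {c : ℝ} (hc : 0 ≤ c) {i : ι} (hi : i ∉ s)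
    (h : ∀ k ∈ s, |f k - g k| ≤ c) : |fmax s f - fmax s g| ≤ c := by
  rw [abs_sub_le_iff, sub_le_iff_le_add', sub_le_iff_le_add']
  constructor
  · refine fmax_le (add_nonneg (fmax_nonneg hi) hc) fun k hk => ?_
    linarith [le_fmax (f := g) hk, le_abs_self (f k - g k), h k hk]
  · refine fmax_le (add_nonneg (fmax_nonneg hi) hc) fun k hk => ?_
    linarith [le_fmax (f := f) hk, neg_abs_le (f k - g k), h k hk]

end FMax

section Offer

variable {ι : Type*} {w α β : ι → ι → ℝ} {i j : ι}

theorem offer_of_add_le (h : α i j + α j i ≤ w i j) (hα : 0 ≤ α j i) :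
    offer w α i j = (w i j - α i j + α j i) / 2 := by
  unfold offer pos
  rw [max_eq_left (by linarith), max_eq_left (by linarith)]
  ring

theorem offer_of_le_add (h : w i j ≤ α i j + α j i) : offer w α i j = pos (w i j - α i j) := by
  unfold offer
  rw [pos, pos, max_eq_right (a := w i j - α i j - α j i) (by linarith)]
  ring

theorem offer_eq_max_min (hα : 0 ≤ α j i) :
    offer w α i j = max 0 (min (w i j - α i j) ((w i j - α i j + α j i) / 2)) := by
  rcases le_total (α i j + α j i) (w i j) with h | h
  · rw [offer_of_add_le h hα, min_eq_right (by linarith), max_eq_right (by linarith)]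
  · rw [offer_of_le_add h, min_eq_left (by linarith), pos, max_comm]

theorem offer_le_max (hα : 0 ≤ α j i) : offer w α i j ≤ max 0 (w i j - α i j) := by
  rw [offer_eq_max_min hα]
  gcongr
  exact min_le_left _ _

theorem abs_offer_sub_offer_le {c : ℝ} (hα : 0 ≤ α j i) (hβ : 0 ≤ β j i)
    (hij : |α i j - β i j| ≤ c) (hji : |α j i - β j i| ≤ c) :
    |offer w α i j - offer w β i j| ≤ c := by
  have hc : 0 ≤ c := (abs_nonneg _).trans hij
  rw [offer_eq_max_min hα, offer_eq_max_min hβ]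
  refine (abs_max_sub_max_le_max _ _ _ _).trans (max_le (by simpa using hc) ?_)
  rw [abs_le] at hij hji
  refine (abs_min_sub_min_le_max _ _ _ _).trans (max_le ?_ ?_) <;> rw [abs_le] <;>
    constructor <;> linarith

end Offer

section Dynamics

variable {V : Type*} [Fintype V] {G : SimpleGraph V} [DecidableRel G.Adj] {w α β : V → V → ℝ}
  {i j k : V}

theorem earn_nonneg : 0 ≤ earn G w α i :=
  fmax_nonneg (i := i) (by simp)

theorem offer_le_earn (hik : G.Adj i k) : offer w α k i ≤ earn G w α i :=
  le_fmax (f := fun k => offer w α k i) (by simp [hik])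

theorem exists_offer_eq_earn (h : 0 < earn G w α i) :
    ∃ k, G.Adj i k ∧ offer w α k i = earn G w α i := by
  obtain ⟨k, hk, hoffer⟩ := exists_eq_fmax h
  exact ⟨k, (G.mem_neighborFinset i k).mp hk, hoffer⟩

variable [DecidableEq V]

theorem upd_nonneg : 0 ≤ upd G w α i j :=
  fmax_nonneg (i := i) (by simp)

theorem offer_le_upd (hik : G.Adj i k) (hkj : k ≠ j) : offer w α k i ≤ upd G w α i j :=
  le_fmax (f := fun k => offer w α k i) (by simp [hik, hkj])

theorem exists_offer_eq_upd (h : 0 < upd G w α i j) :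
    ∃ k, G.Adj i k ∧ k ≠ j ∧ offer w α k i = upd G w α i j := by
  obtain ⟨k, hk, hoffer⟩ := exists_eq_fmax h
  rw [mem_erase, SimpleGraph.mem_neighborFinset] at hk
  exact ⟨k, hk.2, hk.1, hoffer⟩

theorem upd_le_earn : upd G w α i j ≤ earn G w α i :=
  fmax_le earn_nonneg fun k hk =>
    offer_le_earn ((G.mem_neighborFinset i k).mp (mem_of_mem_erase hk))

theorem earn_le_max : earn G w α i ≤ max (offer w α j i) (upd G w α i j) := by
  refine fmax_le (le_max_of_le_right upd_nonneg) fun k hk => ?_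
  rcases eq_or_ne k j with rfl | hkj
  · exact le_max_left _ _
  · exact le_max_of_le_right (offer_le_upd ((G.mem_neighborFinset i k).mp hk) hkj)

theorem upd_le {B : ℝ} (hB : 0 ≤ B) (hα : ValidMsg G α) (hw : ∀ i j, G.Adj i j → w i j ≤ B)
    (i j : V) : upd G w α i j ≤ B := by
  refine fmax_le hB fun k hk => ?_
  rw [mem_erase, SimpleGraph.mem_neighborFinset] at hk
  have hki := hk.2.symm
  exact (offer_le_max (hα i k hk.2)).trans
    (max_le hB (by linarith [hw k i hki, hα k i hki]))

theorem abs_upd_sub_upd_le {c : ℝ} (hc : 0 ≤ c) (hα : ValidMsg G α) (hβ : ValidMsg G β)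
    (h : ∀ i j, G.Adj i j → |α i j - β i j| ≤ c) (i j : V) :
    |upd G w α i j - upd G w β i j| ≤ c := by
  refine abs_fmax_sub_fmax_le hc (i := i) (by simp) fun k hk => ?_
  rw [mem_erase, SimpleGraph.mem_neighborFinset] at hk
  exact abs_offer_sub_offer_le (hα i k hk.2) (hβ i k hk.2) (h k i hk.2.symm) (h i k hk.2)

theorem validMsg_dyn {κ : ℝ} (hκ₀ : 0 ≤ κ) (hκ₁ : κ ≤ 1) (hα : ValidMsg G α) (t : ℕ) :
    ValidMsg G (dyn G w κ α t) := by
  induction t with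
  | zero => exact hα
  | succ t ih =>
    exact fun i j hij => add_nonneg (mul_nonneg (sub_nonneg.mpr hκ₁) (ih i j hij))
      (mul_nonneg hκ₀ upd_nonneg)

theorem isEpsFixedPt_dyn {κ B : ℝ} (hκ : κ ∈ Set.Ioo (0 : ℝ) 1) (hB : 0 ≤ B)
    (hw : ∀ i j, G.Adj i j → w i j ≤ B) (hα : ∀ i j, G.Adj i j → α i j ∈ Set.Icc 0 B) (t : ℕ) :
    IsEpsFixedPt G w (dyn G w κ α t) (B / √(2 * κ * (1 - κ) * (t + 1))) := by
  have hvalid := validMsg_dyn (w := w) hκ.1.le hκ.2.le fun i j hij => (hα i j hij).1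
  let x (n : ℕ) (d : G.Dart) : ℝ := dyn G w κ α n d.fst d.snd
  let y (n : ℕ) (d : G.Dart) : ℝ := upd G w (dyn G w κ α n) d.fst d.snd
  have hnonexp (m n : ℕ) : ‖y m - y n‖ ≤ ‖x m - x n‖ := by
    refine (pi_norm_le_iff_of_nonneg (norm_nonneg _)).mpr fun d => ?_
    exact abs_upd_sub_upd_le (norm_nonneg _) (hvalid m) (hvalid n)
      (fun i j hij => norm_le_pi_norm (x m - x n) ⟨(i, j), hij⟩) _ _
  have hinit (n : ℕ) : ‖x 0 - y n‖ ≤ B := by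
    refine (pi_norm_le_iff_of_nonneg hB).mpr fun d => ?_
    have hx : x 0 d ∈ Set.Icc 0 B := hα _ _ d.adj
    have hy₀ : 0 ≤ y n d := upd_nonneg
    have hy₁ : y n d ≤ B := upd_le hB (hvalid n) hw _ _
    exact abs_sub_le_iff.mpr ⟨by linarith [hx.2], by linarith [hx.1]⟩
  have hrate := norm_iterate_sub_le_div_sqrt hκ (fun _ => rfl) hnonexp hinit t
  exact fun i j hij => (norm_le_pi_norm (x t - y t) ⟨(i, j), hij⟩).trans hrate

end Dynamics

/-! ### Approximate fixed points -/

section OfferPair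

variable {ι : Type*} {w α : ι → ι → ℝ} {i j : ι}

theorem offer_sub_eq_offer_sub (hw : w i j = w j i) (hij : 0 ≤ α i j) (hji : 0 ≤ α j i)
    (h : α i j + α j i ≤ w i j) : offer w α j i - α i j = offer w α i j - α j i := by
  rw [offer_of_add_le h hji, offer_of_add_le (by linarith) hij, hw]
  ring

theorem offer_add_offer_eq (hw : w i j = w j i) (hij : 0 ≤ α i j) (hji : 0 ≤ α j i)
    (h : α i j + α j i ≤ w i j) : offer w α i j + offer w α j i = w i j := by
  rw [offer_of_add_le h hji, offer_of_add_le (by linarith) hij, hw]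
  ring

theorem offer_add_offer_le (hw : w i j = w j i) (hij : 0 ≤ α i j) (hji : 0 ≤ α j i) :
    offer w α i j + offer w α j i ≤ max 0 (w i j) := by
  rcases le_total (α i j + α j i) (w i j) with h | h
  · exact (offer_add_offer_eq hw hij hji h).trans_le (le_max_right _ _)
  · rw [offer_of_le_add h, offer_of_le_add (by linarith), ← hw, pos, pos]
    rcases max_cases (w i j - α i j) 0 with hi | hi <;>
      rcases max_cases (w i j - α j i) 0 with hj | hj <;>
      rcases max_cases 0 (w i j) with hm | hm <;> linarith

end OfferPair

section HasMargin

/-- The offer from `j` to `i` exceeds every other offer to `i`, and `0`, by more than `δ`. -/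
def HasMargin (G : SimpleGraph V) [DecidableRel G.Adj] (w α : V → V → ℝ) (δ : ℝ) (i j : V) : Prop :=
  upd G w α i j + δ < offer w α j i

variable {G : SimpleGraph V} [DecidableRel G.Adj] {w α : V → V → ℝ} {ε δ : ℝ} {i j : V}

theorem HasMargin.mono {δ' : ℝ} (h : HasMargin G w α δ i j) (hδ : δ' ≤ δ) :
    HasMargin G w α δ' i j := by
  unfold HasMargin at *
  linarith

theorem HasMargin.earn_eq (hδ : 0 ≤ δ) (hij : G.Adj i j) (h : HasMargin G w α δ i j) :
    earn G w α i = offer w α j i := by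
  refine le_antisymm (earn_le_max.trans (max_le le_rfl ?_)) (offer_le_earn hij)
  unfold HasMargin at h
  linarith

theorem IsEpsFixedPt.nonneg (hf : IsEpsFixedPt G w α ε) (hij : G.Adj i j) : 0 ≤ ε :=
  (abs_nonneg _).trans (hf i j hij)

theorem HasMargin.add_lt (hs : ∀ i j, w i j = w j i) (hα : ValidMsg G α)
    (hf : IsEpsFixedPt G w α ε) (hij : G.Adj i j) (h : HasMargin G w α ε i j) :
    α i j + α j i < w i j := by
  by_contra! hle
  have hfix := abs_le.mp (hf i j hij)
  have hoffer : offer w α j i ≤ α i j := by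
    rw [offer_of_le_add (by linarith [hs i j]), pos, hs j i]
    exact max_le (by linarith) (hα i j hij)
  unfold HasMargin at h
  linarith

theorem HasMargin.symm (hs : ∀ i j, w i j = w j i) (hα : ValidMsg G α)
    (hf : IsEpsFixedPt G w α ε) (hδ : 0 ≤ δ) (hij : G.Adj i j)
    (h : HasMargin G w α (δ + 2 * ε) i j) : HasMargin G w α δ j i := by
  have hε := hf.nonneg hij
  have hlt := (h.mono (by linarith)).add_lt hs hα hf hij
  have heq := offer_sub_eq_offer_sub (hs i j) (hα i j hij) (hα j i hij.symm) hlt.le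
  have hfix := abs_le.mp (hf i j hij)
  have hfix' := abs_le.mp (hf j i hij.symm)
  unfold HasMargin at *
  linarith

theorem le_earn_add_earn (hs : ∀ i j, w i j = w j i) (hα : ValidMsg G α)
    (hf : IsEpsFixedPt G w α ε) (hij : G.Adj i j) :
    w i j ≤ earn G w α i + earn G w α j + 2 * ε := by
  have hε := hf.nonneg hij
  rcases le_total (α i j + α j i) (w i j) with h | h
  · linarith [offer_add_offer_eq (hs i j) (hα i j hij) (hα j i hij.symm) h,
      offer_le_earn (w := w) (α := α) hij, offer_le_earn (w := w) (α := α) hij.symm]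
  · have hfix := abs_le.mp (hf i j hij)
    have hfix' := abs_le.mp (hf j i hij.symm)
    linarith [upd_le_earn (G := G) (w := w) (α := α) (i := i) (j := j),
      upd_le_earn (G := G) (w := w) (α := α) (i := j) (j := i)]

theorem upd_le_offer_add (hs : ∀ i j, w i j = w j i) (hα : ValidMsg G α)
    (hf : IsEpsFixedPt G w α ε) (hij : G.Adj i j) (hpos : 0 < offer w α j i)
    (hbest : earn G w α i ≤ offer w α j i + δ) :
    upd G w α j i ≤ offer w α i j + 2 * ε + δ := by
  have hε := hf.nonneg hij
  have hfix := abs_le.mp (hf i j hij)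
  have hfix' := abs_le.mp (hf j i hij.symm)
  have hupd : upd G w α i j ≤ earn G w α i := upd_le_earn
  rcases le_total (α i j + α j i) (w i j) with h | h
  · linarith [offer_sub_eq_offer_sub (hs i j) (hα i j hij) (hα j i hij.symm) h]
  · rw [offer_of_le_add (i := j) (by linarith [hs i j]), pos, hs j i] at hpos hbest
    rw [max_eq_left ((lt_max_iff.mp hpos).resolve_right (lt_irrefl 0)).le] at hbest
    rw [offer_of_le_add h]
    have : w i j - α i j ≤ pos (w i j - α i j) := le_max_left _ _
    linarith

theorem earn_add_earn_le (hs : ∀ i j, w i j = w j i) (hα : ValidMsg G α)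
    (hf : IsEpsFixedPt G w α ε) (hδ : 0 ≤ δ) (hij : G.Adj i j) (hpos : 0 < offer w α j i)
    (hbest : earn G w α i ≤ offer w α j i + δ) :
    earn G w α i + earn G w α j ≤ w i j + 2 * ε + 2 * δ := by
  have hε := hf.nonneg hij
  have hw : 0 < w i j := by
    rw [hs]
    have := (lt_max_iff.mp (hpos.trans_le (offer_le_max (hα i j hij)))).resolve_left (lt_irrefl 0)
    linarith [hα j i hij.symm]
  have hsum := offer_add_offer_le (hs i j) (hα i j hij) (hα j i hij.symm)
  rw [max_eq_right hw.le] at hsum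
  have hj : earn G w α j ≤ offer w α i j + 2 * ε + δ :=
    earn_le_max.trans (max_le (by linarith) (upd_le_offer_add hs hα hf hij hpos hbest))
  linarith

end HasMargin

section SurplusRank

variable {V : Type*} [Fintype V] {G : SimpleGraph V} [DecidableRel G.Adj] {w α : V → V → ℝ}
  {y : V → ℝ} {j l : V}

/-- The number of vertices whose earnings exceed the dual value `y` by more than those of `j`. -/
noncomputable def surplusRank (G : SimpleGraph V) [DecidableRel G.Adj] (w α : V → V → ℝ)
    (y : V → ℝ) (j : V) : ℕ :=
  #{l | earn G w α j - y j < earn G w α l - y l}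

theorem surplusRank_lt (h : earn G w α j - y j < earn G w α l - y l) :
    surplusRank G w α y l < surplusRank G w α y j := by
  refine card_lt_card (ssubset_iff_of_subset ?_ |>.mpr ⟨l, by simpa using h, by simp⟩)
  exact fun x hx => by simpa using h.trans (by simpa using hx)

end SurplusRank

section StrictDual

/-- A matching `M` with a dual certificate `y` of its optimality that satisfies strict
complementary slackness with gap `h`. -/
structure StrictDual (G : SimpleGraph V) (w : V → V → ℝ) (M : V → V → Prop) (y : V → ℝ)
    (h : ℝ) : Prop where
  isMatching : IsMatching G M
  eq_zero : ∀ i, (∀ j, ¬M i j) → y i = 0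
  half_le : ∀ i j, M i j → h / 2 ≤ y i
  add_eq : ∀ i j, M i j → y i + y j = w i j
  add_le : ∀ i j, G.Adj i j → ¬M i j → w i j + h ≤ y i + y j

variable {G : SimpleGraph V} [DecidableRel G.Adj] {w α : V → V → ℝ} {M : V → V → Prop} {y : V → ℝ}
  {h ε δ : ℝ} {i j : V}

/-- Without the margin, a competing offer from some `k` is nearly as good. Slackness on `jk` pushes
the earnings of `k` below `y k`, hence those of its partner `l` above `y l`. -/
theorem StrictDual.exists_not_hasMargin (D : StrictDual G w M y h) (hs : ∀ i j, w i j = w j i)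
    (hα : ValidMsg G α) (hf : IsEpsFixedPt G w α ε) (hh : 0 < h) (hε : 64 * ε ≤ h) (hδ₀ : 0 ≤ δ)
    (hδ : δ ≤ h / 8) (hji : M j i) (hj : -ε ≤ earn G w α j - y j)
    (hmargin : ¬HasMargin G w α δ j i) :
    ∃ l k, M l k ∧ earn G w α j - y j < earn G w α l - y l ∧
      ¬HasMargin G w α (δ + 4 * ε) l k := by
  have hnear : earn G w α j ≤ upd G w α j i + δ :=
    earn_le_max.trans (max_le (not_lt.mp hmargin) (by linarith))
  have hyj := D.half_le j i hji
  obtain ⟨k, hjk, hki, hk⟩ := exists_offer_eq_upd (show 0 < upd G w α j i by linarith)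
  have hpos : 0 < offer w α k j := by linarith
  have hreturn := upd_le_offer_add (δ := δ) hs hα hf hjk hpos (by linarith)
  have htight := earn_add_earn_le hs hα hf hδ₀ hjk hpos (by linarith)
  have hslack := D.add_le j k hjk fun hM => hki (D.isMatching.unique _ _ _ hM hji)
  obtain ⟨l, hkl⟩ : ∃ l, M k l := by
    by_contra! hk
    linarith [D.eq_zero k hk, earn_nonneg (G := G) (w := w) (α := α) (i := k)]
  have hlk := D.isMatching.symm _ _ hkl
  have hkl' := D.isMatching.subset _ _ hkl
  have hlj : l ≠ j := by
    rintro rfl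
    exact hki (D.isMatching.unique _ _ _ hlk hji)
  refine ⟨l, k, hlk, ?_, fun hlk' => ?_⟩
  · linarith [le_earn_add_earn hs hα hf hkl', D.add_eq k l hkl]
  · have hkl_margin : HasMargin G w α (δ + 2 * ε) k l :=
      HasMargin.symm hs hα hf (by linarith [hf.nonneg hkl']) hkl'.symm (hlk'.mono (by linarith))
    have hkj_le : offer w α j k ≤ upd G w α k l := offer_le_upd hjk.symm hlj.symm
    have hkl_le : offer w α l k ≤ upd G w α k j := offer_le_upd hkl' hlj
    unfold HasMargin at hkl_margin
    linarith

theorem mul_le_of_mul_card_mul_le {ι : Type*} [Fintype ι] [Nonempty ι] {a x b : ℝ} (ha : 0 ≤ a)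
    (hb : 0 ≤ b) (h : a * (Fintype.card ι * x) ≤ b) : a * x ≤ b := by
  rcases le_total x 0 with hx | hx
  · exact (mul_nonpos_of_nonneg_of_nonpos ha hx).trans hb
  · have hcard : (1 : ℝ) ≤ Fintype.card ι := mod_cast Fintype.card_pos
    exact h.trans' (by gcongr; exact le_mul_of_one_le_left hx hcard)

theorem StrictDual.hasMargin_of_surplus (D : StrictDual G w M y h) (hs : ∀ i j, w i j = w j i)
    (hα : ValidMsg G α) (hf : IsEpsFixedPt G w α ε) (hh : 0 < h)
    (hn : 64 * (Fintype.card V * ε) ≤ h) (hji : M j i) (hj : -ε ≤ earn G w α j - y j) :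
    HasMargin G w α (h / 16) j i := by
  have : Nonempty V := ⟨j⟩
  have hε := mul_le_of_mul_card_mul_le (by norm_num) hh.le hn
  have hε₀ := hf.nonneg (D.isMatching.subset _ _ hji)
  have hrank (j : V) : surplusRank G w α y j * ε ≤ h / 64 := by
    have : (surplusRank G w α y j : ℝ) ≤ Fintype.card V := by exact_mod_cast card_le_univ _
    nlinarith
  suffices ∀ (r : ℕ) (j i : V), M j i → -ε ≤ earn G w α j - y j → surplusRank G w α y j = r →
      HasMargin G w α (h / 8 - 4 * (surplusRank G w α y j * ε)) j i from
    (this _ j i hji hj rfl).mono (by linarith [hrank j])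
  intro r
  induction r using Nat.strong_induction_on with | _ r ih => ?_
  rintro j i hji hj rfl
  by_contra hmargin
  have hrank₀ : 0 ≤ surplusRank G w α y j * ε := by positivity
  obtain ⟨l, k, hlk, hlt, hl⟩ := D.exists_not_hasMargin hs hα hf hh hε (by linarith [hrank j])
    (by linarith) hji hj hmargin
  have hsucc : (surplusRank G w α y l + 1 : ℝ) ≤ surplusRank G w α y j := by
    exact_mod_cast surplusRank_lt hlt
  exact hl ((ih _ (surplusRank_lt hlt) l k hlk (by linarith) rfl).mono (by nlinarith))

theorem StrictDual.hasMargin (D : StrictDual G w M y h) (hs : ∀ i j, w i j = w j i)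
    (hα : ValidMsg G α) (hf : IsEpsFixedPt G w α ε) (hh : 0 < h)
    (hn : 64 * (Fintype.card V * ε) ≤ h) (hji : M j i) : HasMargin G w α (h / 32) j i := by
  have : Nonempty V := ⟨j⟩
  have hε := mul_le_of_mul_card_mul_le (by norm_num) hh.le hn
  have hij := D.isMatching.symm _ _ hji
  have hadj := D.isMatching.subset _ _ hij
  rcases le_or_gt (-ε) (earn G w α j - y j) with hj | hj
  · exact (D.hasMargin_of_surplus hs hα hf hh hn hji hj).mono (by linarith)
  · have hi : -ε ≤ earn G w α i - y i := by
      linarith [le_earn_add_earn hs hα hf hadj, D.add_eq i j hij]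
    exact HasMargin.symm hs hα hf (by linarith) hadj
      ((D.hasMargin_of_surplus hs hα hf hh hn hij hi).mono (by linarith))

theorem StrictDual.earn_eq_zero (D : StrictDual G w M y h) (hs : ∀ i j, w i j = w j i)
    (hα : ValidMsg G α) (hf : IsEpsFixedPt G w α ε) (hε : 2 * ε < h)
    (hmargin : ∀ i j, M i j → HasMargin G w α (2 * ε) i j) (hi : ∀ j, ¬M i j) :
    earn G w α i = 0 := by
  by_contra hne
  have hpos : 0 < earn G w α i := earn_nonneg.lt_of_ne' hne
  obtain ⟨k, hik, hk⟩ := exists_offer_eq_earn hpos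
  have hreturn := upd_le_offer_add (δ := 0) hs hα hf hik (by linarith) (by linarith)
  have htight := earn_add_earn_le hs hα hf le_rfl hik (by linarith) (by linarith)
  have hslack := D.add_le i k hik (hi k)
  have hyi := D.eq_zero i hi
  obtain ⟨l, hkl⟩ : ∃ l, M k l := by
    by_contra! hk
    linarith [D.eq_zero k hk, earn_nonneg (G := G) (w := w) (α := α) (i := k)]
  have hli : l ≠ i := by
    rintro rfl
    exact hi _ (D.isMatching.symm _ _ hkl)
  have hki_le : offer w α i k ≤ upd G w α k l := offer_le_upd hik.symm hli.symm
  have hkl_le : offer w α l k ≤ upd G w α k i := offer_le_upd (D.isMatching.subset _ _ hkl) hli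
  have := hmargin k l hkl
  unfold HasMargin at this
  linarith

end StrictDual

section Decisive

/-- Every vertex of the matching `M` receives its best offer from its partner by a margin of more
than `δ`, and the other vertices receive no positive offer and share no edge of positive weight. -/
structure IsDecisive (G : SimpleGraph V) [DecidableRel G.Adj] (w α : V → V → ℝ) (δ : ℝ)
    (M : V → V → Prop) : Prop where
  isMatching : IsMatching G M
  hasMargin : ∀ i j, M i j → HasMargin G w α δ i j
  earn_eq_zero : ∀ i, (∀ j, ¬M i j) → earn G w α i = 0
  weight_nonpos : ∀ i j, G.Adj i j → (∀ k, ¬M i k) → (∀ k, ¬M j k) → w i j ≤ 0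

variable {G : SimpleGraph V} [DecidableRel G.Adj] {w α : V → V → ℝ} {M : V → V → Prop} {y : V → ℝ}
  {h ε δ : ℝ} {i j k : V}

theorem StrictDual.isDecisive (D : StrictDual G w M y h) (hs : ∀ i j, w i j = w j i)
    (hα : ValidMsg G α) (hf : IsEpsFixedPt G w α ε) (hh : 0 < h)
    (hn : 64 * (Fintype.card V * ε) ≤ h) : IsDecisive G w α (2 * ε) M := by
  have hε (i : V) : 64 * ε ≤ h :=
    have : Nonempty V := ⟨i⟩
    mul_le_of_mul_card_mul_le (by norm_num) hh.le hn
  have hmargin (i j : V) (hij : M i j) : HasMargin G w α (2 * ε) i j :=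
    (D.hasMargin hs hα hf hh hn hij).mono (by linarith [hε i])
  refine ⟨D.isMatching, hmargin, fun i => D.earn_eq_zero hs hα hf (by linarith [hε i]) hmargin,
    fun i j hij hi hj => ?_⟩
  linarith [D.add_le i j hij (hi j), D.eq_zero i hi, D.eq_zero j hj]

theorem IsDecisive.offer_lt (D : IsDecisive G w α δ M) (hij : M i j) (hik : G.Adj i k)
    (hkj : k ≠ j) : offer w α k i + δ < offer w α j i := by
  have hmargin := D.hasMargin i j hij
  have hle : offer w α k i ≤ upd G w α i j := offer_le_upd hik hkj
  unfold HasMargin at hmargin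
  linarith

theorem IsDecisive.earn_eq (D : IsDecisive G w α δ M) (hδ : 0 ≤ δ) (hij : M i j) :
    earn G w α i = offer w α j i :=
  (D.hasMargin i j hij).earn_eq hδ (D.isMatching.subset i j hij)

theorem IsDecisive.earn_eq_upd (D : IsDecisive G w α δ M) (hδ : 0 ≤ δ) (hik : ¬M i k) :
    earn G w α i = upd G w α i k := by
  refine le_antisymm ?_ upd_le_earn
  by_cases hi : ∃ j, M i j
  · obtain ⟨j, hij⟩ := hi
    rw [D.earn_eq hδ hij]
    exact offer_le_upd (D.isMatching.subset i j hij) fun hjk => hik (hjk ▸ hij)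
  · exact (D.earn_eq_zero i (not_exists.mp hi)).trans_le upd_nonneg

theorem IsDecisive.induces (D : IsDecisive G w α δ M) (hδ : 0 ≤ δ) : Induces G (offer w α) M := by
  refine ⟨D.isMatching, fun i ⟨k, hik, hk⟩ => ?_, fun i hi j hij => ?_⟩
  · obtain ⟨j, hij⟩ : ∃ j, M i j := by
      by_contra! hi
      linarith [D.earn_eq_zero i hi, offer_le_earn (w := w) (α := α) hik]
    exact ⟨j, hij, fun l hil hlj => by linarith [D.offer_lt hij hil hlj]⟩
  · have hmargin := D.hasMargin i j hij
    rw [HasMargin, ← D.earn_eq hδ hij, earn, hi] at hmargin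
    linarith [upd_nonneg (G := G) (w := w) (α := α) (i := i) (j := j)]

theorem IsDecisive.add_lt (D : IsDecisive G w α (2 * ε) M) (hs : ∀ i j, w i j = w j i)
    (hα : ValidMsg G α) (hf : IsEpsFixedPt G w α ε) (hij : M i j) : α i j + α j i < w i j := by
  have hadj := D.isMatching.subset i j hij
  exact ((D.hasMargin i j hij).mono (by linarith [hf.nonneg hadj])).add_lt hs hα hf hadj

theorem IsDecisive.lt_add (D : IsDecisive G w α (2 * ε) M) (hs : ∀ i j, w i j = w j i)
    (hα : ValidMsg G α) (hf : IsEpsFixedPt G w α ε) (hij : M i j) (hik : G.Adj i k) (hkj : k ≠ j) :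
    w i k < α i k + α k i := by
  by_contra! hle
  have hoffer : offer w α k i = (w k i - α k i + α i k) / 2 :=
    offer_of_add_le (by linarith [hs i k]) (hα i k hik)
  have hupd : offer w α j i ≤ upd G w α i k :=
    offer_le_upd (D.isMatching.subset i j hij) hkj.symm
  linarith [D.offer_lt hij hik hkj, (abs_le.mp (hf i k hik)).1, hf.nonneg hik, hs i k]

theorem IsDecisive.isOutcome (D : IsDecisive G w α (2 * ε) M) (hs : ∀ i j, w i j = w j i)
    (hα : ValidMsg G α) (hf : IsEpsFixedPt G w α ε) : IsOutcome G w M (earn G w α) := by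
  refine ⟨D.isMatching, fun _ => earn_nonneg, fun i j hij => ?_, D.earn_eq_zero⟩
  have hadj := D.isMatching.subset i j hij
  have hδ : 0 ≤ 2 * ε := by linarith [hf.nonneg hadj]
  rw [D.earn_eq hδ hij, D.earn_eq hδ (D.isMatching.symm i j hij), add_comm]
  exact offer_add_offer_eq (hs i j) (hα i j hadj) (hα j i hadj.symm) (D.add_lt hs hα hf hij).le

theorem IsDecisive.weight_le_of_matched (D : IsDecisive G w α (2 * ε) M)
    (hs : ∀ i j, w i j = w j i) (hα : ValidMsg G α) (hf : IsEpsFixedPt G w α ε) (hik : M i k)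
    (hij : G.Adj i j) (hM : ¬M i j) : w i j ≤ earn G w α i + earn G w α j := by
  have hε := hf.nonneg hij
  have hjk : j ≠ k := fun hjk => hM (hjk ▸ hik)
  have hlt := D.lt_add hs hα hf hik hij hjk
  have hoffer := D.offer_lt hik hij hjk
  rw [offer_of_le_add (i := j) (by linarith [hs i j]), ← D.earn_eq (by linarith) hik] at hoffer
  have hpos : w j i - α j i ≤ pos (w j i - α j i) := le_max_left _ _
  have hupd : upd G w α j i ≤ earn G w α j := upd_le_earn
  linarith [(abs_le.mp (hf j i hij.symm)).2, hs i j]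

theorem IsDecisive.stable (D : IsDecisive G w α (2 * ε) M) (hs : ∀ i j, w i j = w j i)
    (hα : ValidMsg G α) (hf : IsEpsFixedPt G w α ε) : Stable G w M (earn G w α) := by
  intro i j hij hM
  by_cases hi : ∃ k, M i k
  · obtain ⟨k, hik⟩ := hi
    exact D.weight_le_of_matched hs hα hf hik hij hM
  by_cases hj : ∃ k, M j k
  · obtain ⟨k, hjk⟩ := hj
    rw [hs, add_comm]
    exact D.weight_le_of_matched hs hα hf hjk hij.symm fun hji => hM (D.isMatching.symm j i hji)
  · exact (D.weight_nonpos i j hij (not_exists.mp hi) (not_exists.mp hj)).trans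
      (add_nonneg earn_nonneg earn_nonneg)

theorem IsDecisive.abs_sub_bestAlt_le (D : IsDecisive G w α (2 * ε) M) (hs : ∀ i j, w i j = w j i)
    (hα : ValidMsg G α) (hf : IsEpsFixedPt G w α ε) (hij : M i j) :
    |α i j - bestAlt G w (earn G w α) i j| ≤ 2 * ε := by
  have hadj := D.isMatching.subset i j hij
  have hε := hf.nonneg hadj
  have hupd : |upd G w α i j - bestAlt G w (earn G w α) i j| ≤ ε := by
    refine abs_fmax_sub_fmax_le hε (i := i) (by simp) fun k hk => ?_
    rw [mem_erase, SimpleGraph.mem_neighborFinset] at hk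
    obtain ⟨hkj, hik⟩ := hk
    have hki : ¬M k i := fun hki =>
      hkj (D.isMatching.unique i k j (D.isMatching.symm k i hki) hij)
    have hfix := hf k i hik.symm
    rw [← D.earn_eq_upd (by linarith) hki, abs_sub_comm] at hfix
    rw [offer_of_le_add (by linarith [D.lt_add hs hα hf hij hik hkj, hs i k]), hs k i, pos, pos]
    refine (abs_max_sub_max_le_abs _ _ _).trans ?_
    rwa [sub_sub_sub_cancel_left]
  calc |α i j - bestAlt G w (earn G w α) i j|
      ≤ |α i j - upd G w α i j| + |upd G w α i j - bestAlt G w (earn G w α) i j| :=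
        abs_sub_le _ _ _
    _ ≤ 2 * ε := by linarith [hf i j hadj]

theorem IsDecisive.epsBalanced (D : IsDecisive G w α (2 * ε) M) (hs : ∀ i j, w i j = w j i)
    (hα : ValidMsg G α) (hf : IsEpsFixedPt G w α ε) :
    EpsBalanced G w M (earn G w α) (4 * ε) := by
  intro i j hij
  have hji := D.isMatching.symm i j hij
  have hadj := D.isMatching.subset i j hij
  have hδ : 0 ≤ 2 * ε := by linarith [hf.nonneg hadj]
  have hsplit := offer_sub_eq_offer_sub (hs i j) (hα i j hadj) (hα j i hadj.symm)
    (D.add_lt hs hα hf hij).le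
  have hi := abs_le.mp (D.abs_sub_bestAlt_le hs hα hf hij)
  have hj := abs_le.mp (D.abs_sub_bestAlt_le hs hα hf hji)
  rw [D.earn_eq hδ hij, D.earn_eq hδ hji, abs_le]
  constructor <;> linarith

theorem StrictDual.induces_and_isEpsNB (D : StrictDual G w M y h) (hs : ∀ i j, w i j = w j i)
    (hα : ValidMsg G α) (hf : IsEpsFixedPt G w α ε) (hh : 0 < h) (hε₀ : 0 ≤ ε)
    (hn : 64 * (Fintype.card V * ε) ≤ h) :
    Induces G (offer w α) M ∧ IsEpsNB G w M (earn G w α) (4 * ε) := by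
  have hdec := D.isDecisive hs hα hf hh hn
  exact ⟨hdec.induces (by linarith), hdec.isOutcome hs hα hf, hdec.stable hs hα hf,
    hdec.epsBalanced hs hα hf⟩

end Decisive

/-! ### Duality for the assignment problem -/

section Assignment

variable {ι : Type*} {A : ι → ι → ℝ} {q : ι → ℝ}

/-- The least row potential that is dual feasible together with the column potential `q` in the
assignment problem with value matrix `A`. -/
noncomputable def rowPotential (A : ι → ι → ℝ) (q : ι → ℝ) (u : ι) : ℝ := ⨆ v, (A u v - q v)

theorem rowPotential_le {u : ι} {c : ℝ} (h : ∀ v, A u v ≤ c + q v) : rowPotential A q u ≤ c :=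
  have : Nonempty ι := ⟨u⟩
  ciSup_le fun v => sub_le_iff_le_add.mpr (h v)

theorem le_rowPotential_add [Finite ι] (A : ι → ι → ℝ) (q : ι → ℝ) (u v : ι) :
    A u v ≤ rowPotential A q u + q v :=
  sub_le_iff_le_add.mp (le_ciSup (f := fun v => A u v - q v) (Set.finite_range _).bddAbove v)

variable [Fintype ι]

/-- The dual objective of the assignment problem as a function of the column potential alone. -/
noncomputable def dualCost (A : ι → ι → ℝ) (q : ι → ℝ) : ℝ := ∑ u, rowPotential A q u + ∑ v, q v

theorem continuous_dualCost (A : ι → ι → ℝ) : Continuous (dualCost A) := by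
  refine .add (continuous_finsetSum _ fun u _ => ?_) (by fun_prop)
  have : Nonempty ι := ⟨u⟩
  simp only [rowPotential, ← sup'_univ_eq_ciSup]
  exact Continuous.finset_sup'_apply _ fun v _ => by fun_prop

theorem dualCost_sub_const (A : ι → ι → ℝ) (q : ι → ℝ) (c : ℝ) :
    dualCost A (fun v => q v - c) = dualCost A q := by
  have hrow : ∀ u, rowPotential A (fun v => q v - c) u = rowPotential A q u + c := fun u => by
    refine le_antisymm (rowPotential_le fun v => ?_)
      (le_sub_iff_add_le.mp (rowPotential_le fun v => ?_))
    · linarith [le_rowPotential_add A q u v]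
    · linarith [le_rowPotential_add A (fun v => q v - c) u v]
  simp only [dualCost, hrow, sum_add_distrib, sum_sub_distrib]
  ring

theorem dualCost_zero_le_of_lt {v₀ v₁ : ι} (hq : ∀ v, 0 ≤ q v) (hv₀ : q v₀ = 0)
    (hv₁ : 2 * ∑ u, ∑ v, |A u v| < q v₁) : dualCost A 0 ≤ dualCost A q := by
  have habs : ∀ u v, |A u v| ≤ ∑ v, |A u v| := fun u v =>
    single_le_sum (f := fun v => |A u v|) (fun _ _ => abs_nonneg _) (mem_univ v)
  have hzero : dualCost A 0 ≤ ∑ u, ∑ v, |A u v| := by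
    simp only [dualCost, Pi.zero_apply, sum_const_zero, add_zero]
    exact sum_le_sum fun u _ => rowPotential_le fun v => by
      simpa using (le_abs_self _).trans (habs u v)
  have hrows : -∑ u, ∑ v, |A u v| ≤ ∑ u, rowPotential A q u := by
    rw [← sum_neg_distrib]
    refine sum_le_sum fun u _ => ?_
    linarith [le_rowPotential_add A q u v₀, neg_abs_le (A u v₀), habs u v₀]
  have hcols : q v₁ ≤ ∑ v, q v := single_le_sum (fun v _ => hq v) (mem_univ v₁)
  unfold dualCost at *
  linarith

/-- Translating `q` does not change its cost, so `q` may be assumed to have minimum `0`, and then a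
single large coordinate makes it worse than the potential `0`. -/
theorem exists_dualCost_le (A : ι → ι → ℝ) : ∃ q, ∀ q', dualCost A q ≤ dualCost A q' := by
  set b := 2 * ∑ u, ∑ v, |A u v|
  have hb₀ : 0 ≤ b := by positivity
  have hzero : (0 : ι → ℝ) ∈ Set.Icc 0 fun _ => b := ⟨le_rfl, fun _ => hb₀⟩
  obtain ⟨q, -, hmin⟩ :=
    isCompact_Icc.exists_isMinOn ⟨0, hzero⟩ (continuous_dualCost A).continuousOn
  refine ⟨q, fun q' => ?_⟩
  rcases isEmpty_or_nonempty ι with _ | _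
  · rw [Subsingleton.elim q q']
  obtain ⟨v₀, hv₀⟩ := Finite.exists_min q'
  rw [← dualCost_sub_const A q' (q' v₀)]
  by_cases hbox : ∀ v, q' v - q' v₀ ≤ b
  · exact hmin ⟨fun v => sub_nonneg.mpr (hv₀ v), hbox⟩
  · push Not at hbox
    obtain ⟨v₁, hv₁⟩ := hbox
    exact (hmin hzero).trans
      (dualCost_zero_le_of_lt (fun v => sub_nonneg.mpr (hv₀ v)) (sub_self _) hv₁)

/-- The columns `v` at which the dual constraint of the entry `(u, v)` is an equality. -/
noncomputable def tightColumns (A : ι → ι → ℝ) (q : ι → ℝ) (u : ι) : Finset ι :=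
  {v | A u v = rowPotential A q u + q v}

open Topology in
theorem exists_pos_add_le_of_notMem_tightColumns (A : ι → ι → ℝ) (q : ι → ℝ) :
    ∃ θ > 0, ∀ u v, v ∉ tightColumns A q u → A u v + θ ≤ rowPotential A q u + q v := by
  have hsmall : ∀ᶠ θ in 𝓝[>] (0 : ℝ), ∀ u v, v ∉ tightColumns A q u →
      θ ≤ rowPotential A q u + q v - A u v := by
    simp only [Filter.eventually_all]
    intro u v hv
    have hlt : A u v < rowPotential A q u + q v :=
      (le_rowPotential_add A q u v).lt_of_ne (by simpa [tightColumns] using hv)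
    exact Filter.mem_of_superset (Ioc_mem_nhdsGT (sub_pos.mpr hlt)) fun θ hθ => hθ.2
  obtain ⟨θ, hθ, hpos⟩ := (hsmall.and self_mem_nhdsWithin).exists
  exact ⟨θ, hpos, fun u v hv => by linarith [hθ u v hv]⟩

/-- If a set `s` of rows had fewer than `#s` tight columns, raising `q` on those columns would allow
the potentials of the rows in `s` to drop by the same amount, and lower the dual cost. -/
theorem card_le_card_biUnion_tightColumns [DecidableEq ι]
    (hq : ∀ q', dualCost A q ≤ dualCost A q') (s : Finset ι) :
    #s ≤ #(s.biUnion (tightColumns A q)) := by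
  set t := s.biUnion (tightColumns A q)
  obtain ⟨θ, hθ, hslack⟩ := exists_pos_add_le_of_notMem_tightColumns A q
  let q' : ι → ℝ := fun v => q v + if v ∈ t then θ else 0
  have hrow : ∀ u, rowPotential A q' u ≤ rowPotential A q u - if u ∈ s then θ else 0 := by
    refine fun u => rowPotential_le fun v => ?_
    have hle := le_rowPotential_add A q u v
    by_cases hu : u ∈ s <;> by_cases hv : v ∈ t <;> simp only [q', hu, hv, if_true, if_false]
    · linarith
    · have hvu : v ∉ tightColumns A q u := fun h => hv (mem_biUnion.mpr ⟨u, hu, h⟩)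
      linarith [hslack u v hvu]
    all_goals linarith
  have hrows : ∑ u, rowPotential A q' u ≤ ∑ u, rowPotential A q u - #s * θ :=
    (sum_le_sum fun u _ => hrow u).trans_eq (by simp [sum_sub_distrib])
  have hcols : ∑ v, q' v = ∑ v, q v + #t * θ := by simp [q', sum_add_distrib]
  have hcost : dualCost A q ≤ dualCost A q + (#t - #s) * θ := by
    refine (hq q').trans ?_
    unfold dualCost
    linarith
  have hcard : (0 : ℝ) ≤ #t - #s := nonneg_of_mul_nonneg_left (by linarith) hθ
  exact_mod_cast sub_nonneg.mp hcard

theorem exists_perm_mem_tightColumns (hq : ∀ q', dualCost A q ≤ dualCost A q') :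
    ∃ π : Equiv.Perm ι, ∀ u, π u ∈ tightColumns A q u := by
  classical
  obtain ⟨f, hf, hfN⟩ := (all_card_le_biUnion_card_iff_exists_injective (tightColumns A q)).mp
    (card_le_card_biUnion_tightColumns hq)
  exact ⟨Equiv.ofBijective f (Finite.injective_iff_bijective.mp hf), hfN⟩

theorem exists_dual_of_forall_sum_le (σ : Equiv.Perm ι)
    (hσ : ∀ π : Equiv.Perm ι, ∑ u, A u (π u) ≤ ∑ u, A u (σ u)) :
    ∃ p q : ι → ℝ, (∀ u v, A u v ≤ p u + q v) ∧ ∀ u, A u (σ u) = p u + q (σ u) := by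
  obtain ⟨q, hq⟩ := exists_dualCost_le A
  obtain ⟨π, hπ⟩ := exists_perm_mem_tightColumns hq
  have hle := le_rowPotential_add A q
  have hcost : ∀ τ : Equiv.Perm ι, ∑ u, (rowPotential A q u + q (τ u)) = dualCost A q := fun τ => by
    rw [sum_add_distrib, Equiv.sum_comp τ q, dualCost]
  have hπ_cost : ∑ u, A u (π u) = dualCost A q := by
    rw [← hcost π]
    exact sum_congr rfl fun u _ => (mem_filter.mp (hπ u)).2
  have hσ_cost : ∑ u, A u (σ u) = ∑ u, (rowPotential A q u + q (σ u)) :=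
    (sum_le_sum fun u _ => hle u (σ u)).antisymm ((hcost σ).trans hπ_cost.symm ▸ hσ π)
  exact ⟨rowPotential A q, q, hle, fun u =>
    (sum_eq_sum_iff_of_le fun u _ => hle u (σ u)).mp hσ_cost u (mem_univ u)⟩

end Assignment

/-! ### Isolation of the heaviest set -/

section Isolation

open MeasureTheory

section IsolationThreshold

variable {ι : Type*} [DecidableEq ι]

/-- The critical weight of `e` in the set family `F`, a function of the other weights `x`: the
heaviest member of `F` contains `e` if `x e` lies above it and avoids `e` if `x e` lies below. -/
noncomputable def isolationThreshold (F : Set (Finset ι)) (x : ι → ℝ) (e : ι) : ℝ :=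
  (⨆ S : {S // S ∈ F ∧ e ∉ S}, ∑ f ∈ S.1, x f) - ⨆ S : {S // S ∈ F ∧ e ∈ S}, ∑ f ∈ S.1.erase e, x f

theorem isolationThreshold_congr (F : Set (Finset ι)) {x y : ι → ℝ} {e : ι}
    (h : ∀ f, f ≠ e → x f = y f) : isolationThreshold F x e = isolationThreshold F y e := by
  unfold isolationThreshold
  congr! 3 with S S
  · exact sum_congr rfl fun f hf => h f (ne_of_mem_of_not_mem hf S.2.2)
  · exact sum_congr rfl fun f hf => h f (ne_of_mem_erase hf)

variable [Finite ι]

theorem measurable_isolationThreshold (F : Set (Finset ι)) (e : ι) :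
    Measurable fun x => isolationThreshold F x e :=
  .sub (.iSup fun _ => by fun_prop) (.iSup fun _ => by fun_prop)

theorem sum_add_le_of_le_abs_sub_isolationThreshold {F : Set (Finset ι)} {S S' : Finset ι}
    {x : ι → ℝ} {r : ℝ} {e : ι} (hS : S ∈ F) (hmax : ∀ S' ∈ F, ∑ f ∈ S', x f ≤ ∑ f ∈ S, x f)
    (hS' : S' ∈ F) (he : ¬(e ∈ S' ↔ e ∈ S)) (hr : r ≤ |x e - isolationThreshold F x e|) :
    ∑ f ∈ S', x f + r ≤ ∑ f ∈ S, x f := by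
  have herase : ∀ T : {T // T ∈ F ∧ e ∈ T}, ∑ f ∈ T.1.erase e, x f = ∑ f ∈ T.1, x f - x e :=
    fun T => by rw [← sum_erase_add _ _ T.2.2, add_sub_cancel_right]
  unfold isolationThreshold at hr
  simp only [herase] at hr
  set avoid : {T // T ∈ F ∧ e ∉ T} → ℝ := fun T => ∑ f ∈ T.1, x f
  set contain : {T // T ∈ F ∧ e ∈ T} → ℝ := fun T => ∑ f ∈ T.1, x f - x e
  by_cases heS : e ∈ S
  · have heS' : e ∉ S' := fun h => he (iff_of_true h heS)
    have : Nonempty {T // T ∈ F ∧ e ∉ T} := ⟨S', hS', heS'⟩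
    have : Nonempty {T // T ∈ F ∧ e ∈ T} := ⟨S, hS, heS⟩
    have havoid : ∑ f ∈ S', x f ≤ iSup avoid :=
      le_ciSup (Set.finite_range avoid).bddAbove ⟨S', hS', heS'⟩
    have havoid_le : iSup avoid ≤ ∑ f ∈ S, x f := ciSup_le fun T => hmax T T.2.1
    have hcontain : ∑ f ∈ S, x f - x e = iSup contain :=
      (le_ciSup (Set.finite_range contain).bddAbove ⟨S, hS, heS⟩).antisymm
        (ciSup_le fun T => sub_le_sub_right (hmax T T.2.1) _)
    rw [abs_of_nonneg (by linarith)] at hr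
    linarith
  · have heS' : e ∈ S' := by_contra fun h => he (iff_of_false h heS)
    have : Nonempty {T // T ∈ F ∧ e ∉ T} := ⟨S, hS, heS⟩
    have : Nonempty {T // T ∈ F ∧ e ∈ T} := ⟨S', hS', heS'⟩
    have hcontain : ∑ f ∈ S', x f - x e ≤ iSup contain :=
      le_ciSup (Set.finite_range contain).bddAbove ⟨S', hS', heS'⟩
    have hcontain_le : iSup contain ≤ ∑ f ∈ S, x f - x e :=
      ciSup_le fun T => sub_le_sub_right (hmax T T.2.1) _
    have havoid : ∑ f ∈ S, x f = iSup avoid :=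
      (le_ciSup (Set.finite_range avoid).bddAbove ⟨S, hS, heS⟩).antisymm
        (ciSup_le fun T => hmax T T.2.1)
    rw [abs_of_nonpos (by linarith)] at hr
    linarith

theorem exists_gap_of_le_abs_sub_isolationThreshold {F : Set (Finset ι)} (hF : F.Nonempty)
    {x : ι → ℝ} {r : ℝ} (hr : ∀ e, r ≤ |x e - isolationThreshold F x e|) :
    ∃ S ∈ F, ∀ S' ∈ F, S' ≠ S → ∑ e ∈ S', x e + r ≤ ∑ e ∈ S, x e := by
  obtain ⟨S, hS, hmax⟩ := F.exists_max_image (fun S => ∑ e ∈ S, x e) F.toFinite hF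
  refine ⟨S, hS, fun S' hS' hne => ?_⟩
  obtain ⟨e, he⟩ := not_forall.mp (mt Finset.ext hne)
  exact sum_add_le_of_le_abs_sub_isolationThreshold hS hmax hS' he (hr e)

end IsolationThreshold

variable {ι : Type*} [Fintype ι] {μ : ι → Measure ℝ} [∀ e, IsProbabilityMeasure (μ e)] {r : ℝ}
  {b : ENNReal}

theorem measure_pi_abs_sub_lt_le [DecidableEq ι] (e : ι) {D : (ι → ℝ) → ℝ} (hD : Measurable D)
    (hDe : ∀ ω v, D (Function.update ω e v) = D ω) (hb : ∀ c, μ e (Metric.ball c r) ≤ b) :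
    Measure.pi μ {ω | |ω e - D ω| < r} ≤ b := by
  have hmeas : MeasurableSet {ω : ι → ℝ | |ω e - D ω| < r} :=
    measurableSet_lt (by fun_prop) measurable_const
  have hslice : ∀ ω : ι → ℝ, ∫⁻ v, ({ω | |ω e - D ω| < r}.indicator 1 (Function.update ω e v) :
      ENNReal) ∂μ e ≤ b := fun ω => by
    have hball : ∀ v, ({ω | |ω e - D ω| < r}.indicator 1 (Function.update ω e v) : ENNReal) =
        (Metric.ball (D ω) r).indicator 1 v := fun v => by
      simp [Set.indicator, hDe, Real.dist_eq]
    simpa only [hball, lintegral_indicator_one Metric.isOpen_ball.measurableSet] using hb (D ω)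
  rw [← lintegral_indicator_one hmeas, lintegral_eq_lmarginal_univ 0,
    lmarginal_erase' _ (measurable_one.indicator hmeas) (mem_univ e)]
  refine (lmarginal_mono hslice _).trans ?_
  simp [lmarginal]

/-- A gap below `η * r` puts some weight `a e + η * ω e` within `η * r` of its threshold, which does
not depend on `ω e`. -/
theorem measure_pi_not_exists_gap_le {F : Set (Finset ι)} (hF : F.Nonempty) (a : ι → ℝ) {η : ℝ}
    (hη : 0 < η) (hb : ∀ e c, μ e (Metric.ball c r) ≤ b) :
    Measure.pi μ {ω | ¬∃ S ∈ F, ∀ S' ∈ F, S' ≠ S →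
      ∑ e ∈ S', (a e + η * ω e) + η * r ≤ ∑ e ∈ S, (a e + η * ω e)} ≤ Fintype.card ι * b := by
  classical
  let D : ι → (ι → ℝ) → ℝ := fun e ω =>
    (isolationThreshold F (fun f => a f + η * ω f) e - a e) / η
  have hD : ∀ e, Measurable (D e) := fun e =>
    (((measurable_isolationThreshold F e).comp (by fun_prop)).sub_const _).div_const _
  have hDe : ∀ e ω v, D e (Function.update ω e v) = D e ω := fun e ω v => by
    simp only [D]
    rw [isolationThreshold_congr F fun f hf => by rw [Function.update_of_ne hf]]
  calc Measure.pi μ _ ≤ Measure.pi μ (⋃ e, {ω | |ω e - D e ω| < r}) := by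
        refine measure_mono fun ω hω => by_contra fun hfar => hω ?_
        simp only [Set.mem_iUnion, Set.mem_ofPred_eq, not_exists, not_lt] at hfar
        refine exists_gap_of_le_abs_sub_isolationThreshold hF fun e => ?_
        have hscale : a e + η * ω e - isolationThreshold F (fun f => a f + η * ω f) e =
            η * (ω e - D e ω) := by
          simp only [D]
          field_simp
          ring
        rw [hscale, abs_mul, abs_of_pos hη]
        exact mul_le_mul_of_nonneg_left (hfar e) hη.le
    _ ≤ ∑ e, Measure.pi μ {ω | |ω e - D e ω| < r} := measure_iUnion_fintype_le _ _
    _ ≤ ∑ _e : ι, b := sum_le_sum fun e _ => measure_pi_abs_sub_lt_le e (hD e) (hDe e) (hb e)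
    _ = Fintype.card ι * b := by simp

end Isolation

/-! ### Strict dual certificates from a weight gap -/

section EdgeSets

variable {V : Type*} {G : SimpleGraph V} {i j k : V}

theorem coloring_eq_of_adj_of_ne {c : G.Coloring Bool} {b : Bool} (h : G.Adj i j) (hi : c i ≠ b) :
    c j = b :=
  by_contra fun hj => c.valid h ((Bool.eq_not_of_ne hi).trans (Bool.eq_not_of_ne hj).symm)

open Classical in
theorem IsMatching.exists_perm {M : V → V → Prop} (hM : IsMatching G M) :
    ∃ σ : Equiv.Perm V, (∀ i j, M i j → σ i = j) ∧ ∀ i, (∀ j, ¬M i j) → σ i = i := by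
  let f : V → V := fun i => if h : ∃ j, M i j then h.choose else i
  have hmatched : ∀ i j, M i j → f i = j := fun i j hij => by
    have hi : ∃ j, M i j := ⟨j, hij⟩
    simpa only [f, dif_pos hi] using hM.unique _ _ _ hi.choose_spec hij
  have hfree : ∀ i, (∀ j, ¬M i j) → f i = i := fun i hi => dif_neg (not_exists.mpr hi)
  have hf : f.Involutive := fun i => by
    by_cases hi : ∃ j, M i j
    · obtain ⟨j, hij⟩ := hi
      rw [hmatched _ _ hij, hmatched _ _ (hM.symm _ _ hij)]
    · rw [hfree i (not_exists.mp hi), hfree i (not_exists.mp hi)]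
  exact ⟨hf.toPerm, hmatched, hfree⟩

variable [Fintype V] [DecidableRel G.Adj]

/-- The type of edges of `G`, which indexes the perturbation in `pertW`. -/
abbrev Edge (G : SimpleGraph V) [DecidableRel G.Adj] := {e : Sym2 V // e ∈ G.edgeFinset}

/-- The edge joining two adjacent vertices, as an element of `Edge G`. -/
def edgeOf (h : G.Adj i j) : Edge G := ⟨s(i, j), SimpleGraph.mem_edgeFinset.mpr h⟩

theorem edgeOf_symm (h : G.Adj i j) : edgeOf h.symm = edgeOf h := Subtype.ext Sym2.eq_swap

theorem exists_eq_edgeOf (c : G.Coloring Bool) (b : Bool) (e : Edge G) :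
    ∃ i j, ∃ h : G.Adj i j, c i = b ∧ edgeOf h = e := by
  obtain ⟨⟨i, j⟩, he⟩ := e
  have h : G.Adj i j := SimpleGraph.mem_edgeFinset.mp he
  by_cases hi : c i = b
  · exact ⟨i, j, h, hi, rfl⟩
  · exact ⟨j, i, h.symm, coloring_eq_of_adj_of_ne h hi, edgeOf_symm h⟩

/-- The weight function `w`, viewed on the edges of `G`. -/
def edgeWeight {w : V → V → ℝ} (hs : ∀ i j, w i j = w j i) (e : Edge G) : ℝ :=
  Sym2.lift ⟨w, hs⟩ e.1

/-- Two vertices are joined by `S` if the edge between them belongs to `S`. In this way an edge set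
is turned into a relation of the kind expected by `IsMatching`. -/
def Joined (S : Finset (Edge G)) (i j : V) : Prop := ∃ h : G.Adj i j, edgeOf h ∈ S

theorem Joined.symm {S : Finset (Edge G)} (h : Joined S i j) : Joined S j i :=
  ⟨h.1.symm, edgeOf_symm h.1 ▸ h.2⟩

theorem isMatching_joined {S : Finset (Edge G)}
    (h : ∀ i j k, Joined S i j → Joined S i k → j = k) : IsMatching G (Joined S) :=
  ⟨fun _ _ hij => hij.1, fun _ _ => Joined.symm, h⟩

end EdgeSets

section PermEdges

variable {G : SimpleGraph V} [DecidableRel G.Adj] {c : G.Coloring Bool} {i j : V}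
  {π : Equiv.Perm V} {b : Bool}

/-- The edges of `G` of the form `s(u, π u)` with `u` of colour `b`. -/
def permEdges (c : G.Coloring Bool) (π : Equiv.Perm V) (b : Bool) : Finset (Edge G) :=
  {e | ∃ u, c u = b ∧ s(u, π u) = e.1}

theorem edgeOf_mem_permEdges (h : G.Adj i j) : edgeOf h ∈ permEdges c π (c i) ↔ π i = j := by
  simp only [permEdges, mem_filter, mem_univ, true_and, edgeOf, Sym2.eq_iff]
  refine ⟨?_, fun hπ => ⟨i, rfl, .inl ⟨rfl, hπ⟩⟩⟩
  rintro ⟨u, hu, ⟨rfl, hπ⟩ | ⟨rfl, -⟩⟩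
  · exact hπ
  · exact absurd hu.symm (c.valid h)

theorem isMatching_joined_permEdges (c : G.Coloring Bool) (π : Equiv.Perm V) (b : Bool) :
    IsMatching G (Joined (permEdges c π b)) := by
  refine isMatching_joined ?_
  rintro i j k ⟨hij, hj⟩ ⟨hik, hk⟩
  by_cases hb : c i = b
  · subst hb
    exact ((edgeOf_mem_permEdges hij).mp hj).symm.trans ((edgeOf_mem_permEdges hik).mp hk)
  · rw [← edgeOf_symm, ← coloring_eq_of_adj_of_ne hij hb, edgeOf_mem_permEdges] at hj
    rw [← edgeOf_symm, ← coloring_eq_of_adj_of_ne hik hb, edgeOf_mem_permEdges] at hk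
    exact π.injective (hj.trans hk.symm)

theorem sum_permEdges {w : V → V → ℝ} (hs : ∀ i j, w i j = w j i) (c : G.Coloring Bool)
    (π : Equiv.Perm V) (b : Bool) :
    ∑ e ∈ permEdges c π b, edgeWeight hs e =
      ∑ u with c u = b, if G.Adj u (π u) then w u (π u) else 0 := by
  rw [← sum_filter, filter_filter]
  symm
  refine sum_bij (fun u hu => edgeOf (mem_filter.mp hu).2.2) ?_ ?_ ?_ fun _ _ => rfl
  · rintro u hu
    obtain ⟨rfl, hadj⟩ := (mem_filter.mp hu).2
    exact (edgeOf_mem_permEdges hadj).mpr rfl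
  · intro u hu v hv huv
    obtain ⟨hub, hadj⟩ := (mem_filter.mp hu).2
    obtain ⟨hvb, -⟩ := (mem_filter.mp hv).2
    rcases Sym2.eq_iff.mp (congrArg Subtype.val huv) with ⟨h, -⟩ | ⟨-, h⟩
    · exact h
    · exact absurd (hub.trans (h ▸ hvb.symm)) (c.valid hadj)
  · intro e he
    obtain ⟨i, j, h, rfl, rfl⟩ := exists_eq_edgeOf c b e
    obtain rfl := (edgeOf_mem_permEdges h).mp he
    exact ⟨i, by simpa using h, rfl⟩

end PermEdges

section BonusMatrix

variable {G : SimpleGraph V} [DecidableRel G.Adj] {w : V → V → ℝ} {S : Finset (Edge G)} {g : ℝ}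

open Classical in
/-- The indicator of the pairs at which a strict dual certificate for `M` has slack: the edges
outside `M` and the diagonal pairs of matched vertices. -/
noncomputable def slackIndicator (G : SimpleGraph V) (M : V → V → Prop) (u v : V) : ℝ :=
  if u = v ∧ (∃ j, M u j) ∨ G.Adj u v ∧ ¬M u v then 1 else 0

/-- The value matrix of the assignment problem whose dual solutions are strict dual certificates:
the weights of `G`, with a bonus `g` at the pairs at which slack is wanted. -/
noncomputable def bonusMatrix (G : SimpleGraph V) [DecidableRel G.Adj] (w : V → V → ℝ)
    (M : V → V → Prop) (g : ℝ) (u v : V) : ℝ :=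
  (if G.Adj u v then w u v else 0) + g * slackIndicator G M u v

theorem slackIndicator_le_one (G : SimpleGraph V) (M : V → V → Prop) (u v : V) :
    slackIndicator G M u v ≤ 1 := by
  unfold slackIndicator
  split_ifs <;> norm_num

theorem slackIndicator_eq_zero {c : G.Coloring Bool} {π : Equiv.Perm V}
    (h : ∀ b, permEdges c π b = S) (u : V) : slackIndicator G (Joined S) u (π u) = 0 := by
  refine if_neg ?_
  rintro (⟨hu, j, hadj, hj⟩ | ⟨hadj, hS⟩)
  · rw [← h (c u), edgeOf_mem_permEdges] at hj
    exact hadj.ne (hu.trans hj)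
  · exact hS ⟨hadj, h (c u) ▸ (edgeOf_mem_permEdges hadj).mpr rfl⟩

theorem sum_bonusMatrix (hs : ∀ i j, w i j = w j i) (c : G.Coloring Bool) (π : Equiv.Perm V)
    (M : V → V → Prop) (g : ℝ) :
    ∑ u, bonusMatrix G w M g u (π u) =
      ∑ e ∈ permEdges c π true, edgeWeight hs e + ∑ e ∈ permEdges c π false, edgeWeight hs e +
        g * ∑ u, slackIndicator G M u (π u) := by
  have hfalse : ({u | c u = false} : Finset V) = ({u | ¬c u = true} : Finset V) := by simp
  simp only [bonusMatrix, sum_add_distrib, ← mul_sum, sum_permEdges]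
  rw [hfalse, sum_filter_add_sum_filter_not]

theorem permEdges_eq_of_partner (c : G.Coloring Bool) {σ : Equiv.Perm V}
    (hmatched : ∀ i j, Joined S i j → σ i = j) (hfree : ∀ i, (∀ j, ¬Joined S i j) → σ i = i)
    (b : Bool) : permEdges c σ b = S := by
  ext e
  obtain ⟨i, j, h, rfl, rfl⟩ := exists_eq_edgeOf c b e
  rw [edgeOf_mem_permEdges]
  refine ⟨fun hσ => ?_, fun he => hmatched i j ⟨h, he⟩⟩
  by_cases hi : ∃ k, Joined S i k
  · obtain ⟨k, hik, hk⟩ := hi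
    obtain rfl : k = j := (hmatched i k ⟨hik, hk⟩).symm.trans hσ
    exact hk
  · exact absurd ((hfree i (not_exists.mp hi)).symm.trans hσ) h.ne

/-- The permutation `π` traverses two edge matchings, one for each colour of the starting point. Its
bonus is at most `g * |V|`, and vanishes unless one of them differs from `S` and loses that much. -/
theorem sum_bonusMatrix_le (hs : ∀ i j, w i j = w j i) (c : G.Coloring Bool) (hg : 0 ≤ g)
    (hgap : ∀ S' : Finset (Edge G), IsMatching G (Joined S') → S' ≠ S →
      ∑ e ∈ S', edgeWeight hs e + Fintype.card V * g ≤ ∑ e ∈ S, edgeWeight hs e)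
    (π : Equiv.Perm V) :
    ∑ u, bonusMatrix G w (Joined S) g u (π u) ≤ 2 * ∑ e ∈ S, edgeWeight hs e := by
  rw [sum_bonusMatrix hs c]
  by_cases h : ∀ b, permEdges c π b = S
  · simp only [h, slackIndicator_eq_zero h, sum_const_zero]
    linarith
  have hbonus : g * ∑ u, slackIndicator G (Joined S) u (π u) ≤ Fintype.card V * g := by
    rw [mul_comm]
    refine mul_le_mul_of_nonneg_right ?_ hg
    exact (sum_le_card_nsmul _ _ 1 fun u _ => slackIndicator_le_one _ _ _ _).trans (by simp)
  have hle : ∀ b, ∑ e ∈ permEdges c π b, edgeWeight hs e ≤ ∑ e ∈ S, edgeWeight hs e := fun b => by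
    by_cases hb : permEdges c π b = S
    · rw [hb]
    · have : 0 ≤ Fintype.card V * g := by positivity
      linarith [hgap _ (isMatching_joined_permEdges c π b) hb]
  obtain ⟨b, hb⟩ := not_forall.mp h
  have hloss := hgap _ (isMatching_joined_permEdges c π b) hb
  cases b <;> linarith [hle true, hle false]

end BonusMatrix

theorem exists_strictDual_of_gap {V : Type*} [Fintype V] {G : SimpleGraph V} [DecidableRel G.Adj]
    {w : V → V → ℝ} {S : Finset (Edge G)} {g : ℝ} (hs : ∀ i j, w i j = w j i)
    (c : G.Coloring Bool) (hg : 0 ≤ g)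
    (hS : IsMatching G (Joined S))
    (hgap : ∀ S' : Finset (Edge G), IsMatching G (Joined S') → S' ≠ S →
      ∑ e ∈ S', edgeWeight hs e + Fintype.card V * g ≤ ∑ e ∈ S, edgeWeight hs e) :
    ∃ y, StrictDual G w (Joined S) y g := by
  classical
  obtain ⟨σ, hmatched, hfree⟩ := hS.exists_perm
  have hσ := permEdges_eq_of_partner c hmatched hfree
  have hσ_sum : ∑ u, bonusMatrix G w (Joined S) g u (σ u) = 2 * ∑ e ∈ S, edgeWeight hs e := by
    simp only [sum_bonusMatrix hs c, hσ, slackIndicator_eq_zero hσ, sum_const_zero]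
    ring
  obtain ⟨p, q, hle, heq⟩ := exists_dual_of_forall_sum_le σ fun π =>
    (sum_bonusMatrix_le hs c hg hgap π).trans_eq hσ_sum.symm
  have hM_eq : ∀ i j, Joined S i j → p i + q j = w i j := fun i j hij => by
    rw [← hmatched i j hij, ← heq i, hmatched i j hij]
    simp [bonusMatrix, slackIndicator, hij, hij.1, hij.1.ne]
  have hM_le : ∀ i j, G.Adj i j → ¬Joined S i j → w i j + g ≤ p i + q j := fun i j hadj hij => by
    simpa [bonusMatrix, slackIndicator, hadj, hij, hadj.ne] using hle i j
  refine ⟨fun i => (p i + q i) / 2, hS, fun i hi => ?_, fun i j hij => ?_, fun i j hij => ?_,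
    fun i j hadj hij => ?_⟩
  · have hdiag := heq i
    rw [hfree i hi] at hdiag
    simp [← hdiag, bonusMatrix, slackIndicator, hi]
  · have hdiag : bonusMatrix G w (Joined S) g i i = g := by
      simp [bonusMatrix, slackIndicator, show ∃ j, Joined S i j from ⟨j, hij⟩]
    linarith [hle i i]
  · linarith [hM_eq i j hij, hM_eq j i hij.symm, hs i j]
  · linarith [hM_le i j hadj hij, hM_le j i hadj.symm (mt Joined.symm hij), hs i j]

/-! ### Perturbed weights -/

section Perturbation

open MeasureTheory

/-- The law of independent uniform random variables on `[0, 1]`, indexed by `ι`. -/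
noncomputable abbrev uniformCube (ι : Type*) [Fintype ι] : Measure (ι → ℝ) :=
  .pi fun _ => volume.restrict (Set.Icc 0 1)

instance isProbabilityMeasure_restrict_Icc :
    IsProbabilityMeasure (volume.restrict (Set.Icc (0 : ℝ) 1)) := ⟨by simp⟩

theorem ae_uniformCube_mem_Icc (ι : Type*) [Fintype ι] :
    ∀ᵐ ω ∂uniformCube ι, ∀ e, ω e ∈ Set.Icc (0 : ℝ) 1 := by
  rw [uniformCube, ← Measure.restrict_pi_pi]
  filter_upwards [ae_restrict_mem (.univ_pi fun _ => measurableSet_Icc)] with ω hω e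
  exact hω e (Set.mem_univ e)

theorem ofReal_one_sub_le_measure {Ω : Type*} [MeasurableSpace Ω] {μ : Measure Ω}
    [IsProbabilityMeasure μ] {A B : Set Ω} {ξ : ℝ} (hξ : 0 ≤ ξ) (hB : μ Bᶜ ≤ ENNReal.ofReal ξ)
    (hBA : ∀ᵐ ω ∂μ, ω ∈ B → ω ∈ A) : ENNReal.ofReal (1 - ξ) ≤ μ A := by
  rw [ENNReal.ofReal_sub _ hξ, ENNReal.ofReal_one, tsub_le_iff_right]
  calc 1 = μ Set.univ := measure_univ.symm
    _ ≤ μ (A ∪ Bᶜ) := measure_mono_ae <| by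
        filter_upwards [hBA] with ω hω _
        exact (em (ω ∈ B)).imp hω id
    _ ≤ μ A + μ Bᶜ := measure_union_le _ _
    _ ≤ μ A + ENNReal.ofReal ξ := by gcongr

variable {G : SimpleGraph V} [DecidableRel G.Adj] {w : V → V → ℝ} {i j : V}

theorem pertW_of_adj (w : V → V → ℝ) (η : ℝ) (ω : Edge G → ℝ) (h : G.Adj i j) :
    pertW G w η ω i j = w i j + η * ω (edgeOf h) := by
  rw [pertW, dif_pos h, edgeOf]

theorem pertW_symm (hs : ∀ i j, w i j = w j i) (η : ℝ) (ω : Edge G → ℝ) (i j : V) :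
    pertW G w η ω i j = pertW G w η ω j i := by
  by_cases h : G.Adj i j
  · rw [pertW_of_adj w η ω h, pertW_of_adj w η ω h.symm, edgeOf_symm, hs]
  · rw [pertW, pertW, dif_neg h, dif_neg (mt SimpleGraph.Adj.symm h), hs]

theorem edgeWeight_pertW (hs : ∀ i j, w i j = w j i) (η : ℝ) (ω : Edge G → ℝ) (e : Edge G) :
    edgeWeight (pertW_symm hs η ω) e = edgeWeight hs e + η * ω e := by
  obtain ⟨⟨i, j⟩, he⟩ := e
  exact pertW_of_adj w η ω (SimpleGraph.mem_edgeFinset.mp he)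

theorem pertW_le {B η : ℝ} (hη : 0 ≤ η) (hw : w i j + η ≤ B) {ω : Edge G → ℝ}
    (hω : ∀ e, ω e ≤ 1) (h : G.Adj i j) : pertW G w η ω i j ≤ B := by
  rw [pertW_of_adj w η ω h]
  linarith [mul_le_of_le_one_right hη (hω (edgeOf h))]

theorem measure_not_exists_strictDual_le (c : G.Coloring Bool) (hs : ∀ i j, w i j = w j i)
    {η g : ℝ} (hη : 0 < η) (hg : 0 ≤ g) :
    uniformCube (Edge G) {ω | ∃ M y, StrictDual G (pertW G w η ω) M y g}ᶜ ≤
      ENNReal.ofReal (2 * Fintype.card V * #G.edgeFinset * g / η) := by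
  have hempty : IsMatching G (Joined (∅ : Finset (Edge G))) :=
    isMatching_joined fun i j k hij => absurd hij.2 (notMem_empty _)
  have hsub : {ω | ∃ M y, StrictDual G (pertW G w η ω) M y g}ᶜ ⊆
      {ω | ¬∃ S ∈ {S | IsMatching G (Joined S)}, ∀ S' ∈ {S | IsMatching G (Joined S)}, S' ≠ S →
        ∑ e ∈ S', (edgeWeight hs e + η * ω e) + η * (Fintype.card V * g / η) ≤
          ∑ e ∈ S, (edgeWeight hs e + η * ω e)} := by
    rintro ω hω ⟨S, hS, hgap⟩
    simp only [← edgeWeight_pertW hs, mul_div_cancel₀ _ hη.ne'] at hgap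
    exact hω ⟨_, exists_strictDual_of_gap (pertW_symm hs η ω) c hg hS hgap⟩
  refine (measure_mono hsub).trans ((measure_pi_not_exists_gap_le ⟨∅, hempty⟩ (edgeWeight hs) hη
    fun _ x => (Measure.restrict_apply_le _ _).trans_eq (Real.volume_ball x _)).trans_eq ?_)
  rw [Fintype.card_coe, ← ENNReal.ofReal_natCast, ← ENNReal.ofReal_mul (by positivity)]
  ring_nf

end Perturbation

section Convergence

theorem mul_div_sqrt_le_of_le {k g x t : ℝ} (hk : 0 < k) (hg : 0 < g)
    (ht : 2048 / k * (x / g) ^ 2 ≤ t) : 64 * (x / √(2 * k * (t + 1))) ≤ g := by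
  have hsq : (64 * (x / g)) ^ 2 ≤ 2 * k * (t + 1) := by
    rw [div_mul_eq_mul_div, div_le_iff₀ hk] at ht
    linarith
  have hpos : 0 < √(2 * k * (t + 1)) := by
    have : 0 ≤ t := le_trans (by positivity) ht
    positivity
  have hle : 64 * x ≤ √(2 * k * (t + 1)) * g := by
    rw [← div_le_iff₀ hg, mul_div_assoc]
    exact Real.le_sqrt_of_sq_le hsq
  rw [← mul_div_assoc]
  exact div_le_of_le_mul₀ hpos.le hg.le (by linarith)

theorem four_mul_div_sqrt_le {k B t : ℝ} (hk : 0 < k) (hB : 0 ≤ B) (ht : 0 < t) :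
    4 * (B / √(2 * k * (t + 1))) ≤ 6 * B / √(Real.pi * k * t) := by
  have := Real.pi_pos
  have hsqrt : √(Real.pi * k * t) ≤ 3 / 2 * √(2 * k * (t + 1)) := by
    refine Real.sqrt_le_iff.mpr ⟨by positivity, ?_⟩
    rw [mul_pow, Real.sq_sqrt (by positivity)]
    nlinarith [mul_pos hk ht, Real.pi_lt_four]
  calc 4 * (B / √(2 * k * (t + 1))) = 6 * B / (3 / 2 * √(2 * k * (t + 1))) := by
        field_simp
        ring
    _ ≤ 6 * B / √(Real.pi * k * t) := by gcongr

variable {G : SimpleGraph V} [DecidableRel G.Adj] {w α : V → V → ℝ} {M : V → V → Prop} {y : V → ℝ}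
  {κ B g : ℝ}

theorem IsEpsNB.mono {γ : V → ℝ} {ε ε' : ℝ} (h : IsEpsNB G w M γ ε) (hε : ε ≤ ε') :
    IsEpsNB G w M γ ε' :=
  ⟨h.1, h.2.1, fun i j hij => (h.2.2 i j hij).trans hε⟩

theorem StrictDual.induces_and_isEpsNB_dyn [Nonempty V] (D : StrictDual G w M y g)
    (hs : ∀ i j, w i j = w j i) (hg : 0 < g) (hκ : κ ∈ Set.Ioo (0 : ℝ) 1) (hB : 0 < B)
    (hw : ∀ i j, G.Adj i j → w i j ≤ B) (hα : ∀ i j, G.Adj i j → α i j ∈ Set.Icc 0 B) {t : ℕ}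
    (ht : 2048 / (κ * (1 - κ)) * (Fintype.card V * B / g) ^ 2 ≤ t) :
    Induces G (offer w (dyn G w κ α t)) M ∧ IsEpsNB G w M (earn G w (dyn G w κ α t))
      (6 * B / √(Real.pi * κ * (1 - κ) * t)) := by
  have hk : 0 < κ * (1 - κ) := mul_pos hκ.1 (sub_pos.mpr hκ.2)
  have : (0 : ℝ) < Fintype.card V := mod_cast Fintype.card_pos
  have ht₀ : (0 : ℝ) < t := lt_of_lt_of_le (by positivity) ht
  have hfix := isEpsFixedPt_dyn hκ hB.le hw hα t
  have hvalid := validMsg_dyn (w := w) hκ.1.le hκ.2.le (fun i j hij => (hα i j hij).1) t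
  rw [mul_assoc 2] at hfix
  set ε := B / √(2 * (κ * (1 - κ)) * (t + 1)) with hε
  have hn : 64 * (Fintype.card V * ε) ≤ g := by
    rw [hε, ← mul_div_assoc]
    exact mul_div_sqrt_le_of_le hk hg ht
  refine (D.induces_and_isEpsNB hs hvalid hfix hg (by positivity) hn).imp_right fun h => h.mono ?_
  rw [mul_assoc Real.pi]
  exact four_mul_div_sqrt_le hk hB.le ht₀

theorem induces_and_isEpsNB_of_edgeless (hG : ∀ i j, ¬G.Adj i j) (hs : ∀ i j, w i j = w j i) :
    Induces G (offer w α) (fun _ _ => False) ∧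
      IsEpsNB G w (fun _ _ => False) (earn G w α) 0 := by
  have D : StrictDual G w (fun _ _ => False) 0 1 := by
    refine ⟨⟨?_, ?_, ?_⟩, ?_, ?_, ?_, ?_⟩ <;> simp [hG]
  simpa using D.induces_and_isEpsNB (ε := 0) hs (fun i j h => absurd h (hG i j))
    (fun i j h => absurd h (hG i j)) one_pos le_rfl (by simp)

theorem bipartite_polynomial_convergence_general (hκ : κ ∈ Set.Ioo (0 : ℝ) 1)
    (hG : G.Colorable 2) (hs : ∀ i j, w i j = w j i) {ξ η : ℝ} (hξ : 0 < ξ) (hη : 0 < η)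
    (hB : 0 < B) (hw : ∀ i j, G.Adj i j → w i j + η ≤ B) :
    ENNReal.ofReal (1 - ξ) ≤ uniformCube (Edge G)
      {ω | ∃ M : V → V → Prop, ∀ α, (∀ i j, G.Adj i j → α i j ∈ Set.Icc 0 B) → ∀ t : ℕ,
        8192 / (κ * (1 - κ)) * (B * (Fintype.card V ^ 2 * #G.edgeFinset) / (η * ξ)) ^ 2 ≤ t →
        Induces G (offer (pertW G w η ω) (dyn G (pertW G w η ω) κ α t)) M ∧
        IsEpsNB G (pertW G w η ω) M (earn G (pertW G w η ω) (dyn G (pertW G w η ω) κ α t))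
          (6 * B / √(Real.pi * κ * (1 - κ) * t))} := by
  rcases G.edgeFinset.eq_empty_or_nonempty with hE | hE
  · have hadj : ∀ i j, ¬G.Adj i j := by simp [SimpleGraph.edgeFinset_eq_empty.mp hE]
    refine (ENNReal.ofReal_le_one.mpr (by linarith)).trans_eq ?_
    rw [← MeasureTheory.measure_univ (μ := uniformCube (Edge G)), eq_comm]
    congr 1
    refine Set.eq_univ_of_forall fun ω => ⟨fun _ _ => False, fun α _ t _ => ?_⟩
    exact (induces_and_isEpsNB_of_edgeless hadj (pertW_symm hs η ω)).imp_right
      fun h => h.mono (by positivity)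
  have : (0 : ℝ) < #G.edgeFinset := mod_cast hE.card_pos
  have hV : Nonempty V := ⟨hE.choose.out.1⟩
  have : (0 : ℝ) < Fintype.card V := mod_cast Fintype.card_pos
  set g := η * ξ / (2 * Fintype.card V * #G.edgeFinset) with hg
  have hg₀ : 0 < g := by positivity
  refine ofReal_one_sub_le_measure hξ.le ((measure_not_exists_strictDual_le
    (hG.toColoring (by simp)) hs hη hg₀.le).trans_eq ?_) ?_
  · congr 1
    rw [hg]
    field_simp
  filter_upwards [ae_uniformCube_mem_Icc (Edge G)] with ω hω ⟨M, y, D⟩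
  refine ⟨M, fun α hα t ht => D.induces_and_isEpsNB_dyn (pertW_symm hs η ω) hg₀ hκ hB
    (fun i j h => pertW_le hη.le (hw i j h) (fun e => (hω e).2) h) hα (ht.trans' (le_of_eq ?_))⟩
  rw [hg]
  field_simp
  norm_num

end Convergence

/-- On bipartite networks with weights in `[0,1]`, after an i.i.d.
uniform `[0,η]` perturbation of the weights, with probability at least `1 − ξ` there
is a matching `M` that is induced by all iterates `α^t` with `t ≥ T* = C(n²|E|/(ηξ))²`,
and `(γ^t, M)` is a `(12/√(π κ(1−κ)t))`-NB solution of the perturbed instance. -/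
theorem bipartite_polynomial_convergence (κ : ℝ) (hκ : κ ∈ Set.Ioo (0 : ℝ) 1) :
    ∃ C : ℝ, 0 < C ∧
      ∀ (V : Type) [Fintype V] [DecidableEq V]
        (G : SimpleGraph V) [DecidableRel G.Adj], G.Colorable 2 →
        ∀ w : V → V → ℝ, GoodW G w → (∀ i j, G.Adj i j → w i j ≤ 1) →
        ∀ ξ η : ℝ, ξ ∈ Set.Ioo (0 : ℝ) 1 → η ∈ Set.Ioo (0 : ℝ) 1 →
        ∀ α0 : V → V → ℝ, (∀ i j, G.Adj i j → α0 i j ∈ Set.Icc (0 : ℝ) 2) →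
        ENNReal.ofReal (1 - ξ) ≤
          (MeasureTheory.Measure.pi fun _ : {e : Sym2 V // e ∈ G.edgeFinset} =>
              MeasureTheory.volume.restrict (Set.Icc (0 : ℝ) 1))
            {ω | ∃ M : V → V → Prop,
              ∀ t : ℕ,
                C * (((Fintype.card V : ℝ) ^ 2 * (G.edgeFinset.card : ℝ)) /
                  (η * ξ)) ^ 2 ≤ t →
                Induces G (offer (pertW G w η ω) (dyn G (pertW G w η ω) κ α0 t)) M ∧
                IsEpsNB G (pertW G w η ω) M
                  (earn G (pertW G w η ω) (dyn G (pertW G w η ω) κ α0 t))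
                  (12 / Real.sqrt (Real.pi * κ * (1 - κ) * t))} := by
  have hk : 0 < κ * (1 - κ) := mul_pos hκ.1 (sub_pos.mpr hκ.2)
  refine ⟨32768 / (κ * (1 - κ)), by positivity, fun V _ _ G _ hG w hw hw₁ ξ η hξ hη α0 hα => ?_⟩
  refine (bipartite_polynomial_convergence_general (B := 2) hκ hG hw.1 hξ.1 hη.1 two_pos
    fun i j h => by linarith [hw₁ i j h, hη.2]).trans (MeasureTheory.measure_mono ?_)
  rintro ω ⟨M, hM⟩
  refine ⟨M, fun t ht => ?_⟩
  convert hM α0 hα t (ht.trans' (le_of_eq (by ring))) using 2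
  norm_num

end EN
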